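/- arXiv:2503.20329 — 4 statements merged into one kernel-verified Lean document; each statement's English description precedes it below -/
import Mathlib

section
/- Let G be a connected finite simple graph and let A be a minimal edge cut of G with |A| = 1 (i.e., the unique edge of A is a bridge). Let G_1 and G_2 be the two connected components of G − A. Then y_G = y_{G_1} + y_{G_2}. -/
open SimpleGraph

/-- The number of connected components of a graph. -/
noncomputable def numComp {V : Type*} (G : SimpleGraph V) : ℕ :=
  Nat.card G.ConnectedComponent

/-- `y_G(A) = 2 c(G - A) - |A| - 1`. -/
noncomputable def yVal {V : Type*} (G : SimpleGraph V) (A : Set (Sym2 V)) : ℤ :=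
  2 * (numComp (G.deleteEdges A) : ℤ) - (A.ncard : ℤ) - 1

/-- `y_G = max_{A ⊆ E(G)} y_G(A)`. -/
noncomputable def yMax {V : Type*} (G : SimpleGraph V) : ℤ :=
  sSup { y : ℤ | ∃ A ⊆ G.edgeSet, yVal G A = y }

theorem reach_induce {V : Type*} (K : SimpleGraph V) (s : Set V)
    (hs : ∀ a b, K.Adj a b → a ∈ s → b ∈ s) {a b : V} (w : K.Walk a b) :
    ∀ (ha : a ∈ s), ∃ hb : b ∈ s, (K.induce s).Reachable ⟨a, ha⟩ ⟨b, hb⟩ := by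
  induction w with
  | nil => exact fun ha => ⟨ha, Reachable.refl _⟩
  | @cons u v w h p ih =>
    intro ha
    have hv := hs _ _ h ha
    obtain ⟨hb, hr⟩ := ih hv
    refine ⟨hb, Reachable.trans (Adj.reachable ?_) hr⟩
    simpa using h

theorem numComp_split {V : Type*} [Finite V] (K : SimpleGraph V) (s t : Set V)
    (hs : ∀ a b, K.Adj a b → a ∈ s → b ∈ s) (ht : ∀ a b, K.Adj a b → a ∈ t → b ∈ t)
    (hst : ∀ a, a ∈ s → a ∉ t) (hun : ∀ a, a ∈ s ∨ a ∈ t) :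
    numComp K = numComp (K.induce s) + numComp (K.induce t) := by
  unfold numComp
  rw [← Nat.card_sum]
  symm
  let f : (K.induce s).ConnectedComponent ⊕ (K.induce t).ConnectedComponent →
      K.ConnectedComponent :=
    Sum.elim (ConnectedComponent.map (Embedding.induce s).toHom)
      (ConnectedComponent.map (Embedding.induce t).toHom)
  refine Nat.card_congr (Equiv.ofBijective f ⟨?_, ?_⟩)
  · rintro (x | x) (y | y) hxy
    all_goals
      induction x using ConnectedComponent.ind with | _ x
      induction y using ConnectedComponent.ind with | _ y
      obtain ⟨w⟩ : K.Reachable x.1 y.1 := ConnectedComponent.exact hxy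
    · obtain ⟨_, h⟩ := reach_induce K s hs w x.2
      exact congrArg _ (ConnectedComponent.sound h)
    · obtain ⟨h, _⟩ := reach_induce K s hs w x.2
      exact absurd y.2 (hst _ h)
    · obtain ⟨h, _⟩ := reach_induce K t ht w x.2
      exact absurd h (hst _ y.2)
    · obtain ⟨_, h⟩ := reach_induce K t ht w x.2
      exact congrArg _ (ConnectedComponent.sound h)
  · intro x
    induction x using ConnectedComponent.ind with | _ x
    rcases hun x with h | h
    · exact ⟨Sum.inl ((K.induce s).connectedComponentMk ⟨x, h⟩), rfl⟩
    · exact ⟨Sum.inr ((K.induce t).connectedComponentMk ⟨x, h⟩), rfl⟩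

theorem numComp_lt {V : Type*} [Finite V] (K L : SimpleGraph V) (hKL : K ≤ L) (u v : V)
    (hL : L.Reachable u v) (hK : ¬ K.Reachable u v) : numComp L < numComp K := by
  unfold numComp
  have hsurj : Function.Surjective (ConnectedComponent.map (Hom.ofLE hKL)) := by
    intro x
    induction x using ConnectedComponent.ind with | _ x
    exact ⟨K.connectedComponentMk x, rfl⟩
  refine lt_of_le_of_ne (Nat.card_le_card_of_surjective _ hsurj) fun heq => hK ?_
  have hb := (Nat.bijective_iff_surjective_and_card _).2 ⟨hsurj, heq.symm⟩
  apply ConnectedComponent.exact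
  apply hb.1
  exact ConnectedComponent.sound hL

theorem yMax_isGreatest {V : Type*} [Finite V] (G : SimpleGraph V) :
    IsGreatest { y : ℤ | ∃ A ⊆ G.edgeSet, yVal G A = y } (yMax G) := by
  have hf : { y : ℤ | ∃ A ⊆ G.edgeSet, yVal G A = y }.Finite :=
    (Set.toFinite {A | A ⊆ G.edgeSet}).image (yVal G)
  have hne : { y : ℤ | ∃ A ⊆ G.edgeSet, yVal G A = y }.Nonempty :=
    ⟨_, ∅, Set.empty_subset _, rfl⟩
  exact ⟨Int.csSup_mem hne hf.bddAbove, fun y hy => le_csSup hf.bddAbove hy⟩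

theorem yVal_split {V : Type*} [Finite V] (G : SimpleGraph V) (u v : V) (s t : Set V)
    (hs : ∀ a b, (G.deleteEdges {s(u, v)}).Adj a b → a ∈ s → b ∈ s)
    (ht : ∀ a b, (G.deleteEdges {s(u, v)}).Adj a b → a ∈ t → b ∈ t)
    (hst : ∀ a, a ∈ s → a ∉ t) (hun : ∀ a, a ∈ s ∨ a ∈ t)
    (hus : ¬ (u ∈ s ∧ v ∈ s)) (hut : ¬ (u ∈ t ∧ v ∈ t))
    (B : Set (Sym2 V)) (hB : B ⊆ G.edgeSet) (he : s(u, v) ∈ B) :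
    yVal G B =
      yVal ((G.deleteEdges {s(u, v)}).induce s) (Sym2.map (Subtype.val : s → V) ⁻¹' B) +
      yVal ((G.deleteEdges {s(u, v)}).induce t) (Sym2.map (Subtype.val : t → V) ⁻¹' B) := by
  have key : ∀ r : Set V, ((G.deleteEdges {s(u, v)}).induce r).deleteEdges
      (Sym2.map (Subtype.val : r → V) ⁻¹' B) = (G.deleteEdges B).induce r := by
    intro r
    ext a b
    simp only [deleteEdges_adj, comap_adj, Function.Embedding.subtype_apply, Set.mem_preimage,
      Sym2.map_mk, Set.mem_singleton_iff]
    constructor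
    · rintro ⟨⟨h1, _⟩, h2⟩
      exact ⟨h1, h2⟩
    · rintro ⟨h1, h2⟩
      exact ⟨⟨h1, fun h => h2 (h ▸ he)⟩, h2⟩
  have hle : G.deleteEdges B ≤ G.deleteEdges {s(u, v)} :=
    deleteEdges_anti (by simpa using he)
  have hn := numComp_split (G.deleteEdges B) s t (fun a b h => hs a b (hle h))
    (fun a b h => ht a b (hle h)) hst hun
  have hB' : B = insert s(u, v)
      (Sym2.map (Subtype.val : s → V) '' (Sym2.map (Subtype.val : s → V) ⁻¹' B) ∪
       Sym2.map (Subtype.val : t → V) '' (Sym2.map (Subtype.val : t → V) ⁻¹' B)) := by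
    ext x
    induction x using Sym2.ind with | _ a b
    constructor
    · intro hx
      by_cases hxe : s(a, b) = s(u, v)
      · exact Or.inl hxe
      right
      have hadj : (G.deleteEdges {s(u, v)}).Adj a b := by
        rw [deleteEdges_adj]
        exact ⟨hB hx, hxe⟩
      rcases hun a with h | h
      · exact Or.inl ⟨s(⟨a, h⟩, ⟨b, hs _ _ hadj h⟩), hx, rfl⟩
      · exact Or.inr ⟨s(⟨a, h⟩, ⟨b, ht _ _ hadj h⟩), hx, rfl⟩
    · rintro (h | ⟨y, hy, h⟩ | ⟨y, hy, h⟩)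
      · exact h ▸ he
      · exact h ▸ hy
      · exact h ▸ hy
  have hc : B.ncard = (Sym2.map (Subtype.val : s → V) ⁻¹' B).ncard +
      (Sym2.map (Subtype.val : t → V) ⁻¹' B).ncard + 1 := by
    conv_lhs => rw [hB']
    rw [Set.ncard_insert_of_notMem, Set.ncard_union_eq,
      Set.ncard_image_of_injective _ (Sym2.map.injective Subtype.val_injective),
      Set.ncard_image_of_injective _ (Sym2.map.injective Subtype.val_injective)]
    · rw [Set.disjoint_left]
      rintro _ ⟨y, -, rfl⟩ ⟨z, -, h⟩
      induction y using Sym2.ind with | _ a b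
      induction z using Sym2.ind with | _ c d
      have ha := hst _ a.2
      have hc := c.2
      have hd := d.2
      simp only [Sym2.map_mk, Sym2.eq_iff] at h
      rcases h with ⟨h, _⟩ | ⟨_, h⟩
      · exact ha (h ▸ hc)
      · exact ha (h ▸ hd)
    · rintro (⟨y, -, h⟩ | ⟨y, -, h⟩)
      all_goals
        induction y using Sym2.ind with | _ a b
        have ha := a.2
        have hb := b.2
        simp only [Sym2.map_mk, Sym2.eq_iff] at h
        rcases h with ⟨h, h'⟩ | ⟨h, h'⟩ <;> rw [h] at ha <;> rw [h'] at hb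
      · exact hus ⟨ha, hb⟩
      · exact hus ⟨hb, ha⟩
      · exact hut ⟨ha, hb⟩
      · exact hut ⟨hb, ha⟩
  unfold yVal
  rw [key s, key t, hn, hc]
  push_cast
  ring

theorem edge_notMem_image {V : Type*} (u v : V) (r : Set V) (h : ¬ (u ∈ r ∧ v ∈ r))
    (x : Sym2 r) : Sym2.map (Subtype.val : r → V) x ≠ s(u, v) := by
  induction x using Sym2.ind with | _ a b
  intro hx
  have ha := a.2
  have hb := b.2
  simp only [Sym2.map_mk, Sym2.eq_iff] at hx
  rcases hx with ⟨h1, h2⟩ | ⟨h1, h2⟩ <;> rw [h1] at ha <;> rw [h2] at hb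
  · exact h ⟨ha, hb⟩
  · exact h ⟨hb, ha⟩

theorem disj_image {V : Type*} (s t : Set V) (hst : ∀ a, a ∈ s → a ∉ t)
    (x : Sym2 s) (y : Sym2 t) :
    Sym2.map (Subtype.val : s → V) x ≠ Sym2.map (Subtype.val : t → V) y := by
  induction x using Sym2.ind with | _ a b
  induction y using Sym2.ind with | _ c d
  intro h
  have ha := hst _ a.2
  have hc := c.2
  have hd := d.2
  simp only [Sym2.map_mk, Sym2.eq_iff] at h
  rcases h with ⟨h, _⟩ | ⟨h, _⟩
  · exact ha (h ▸ hc)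
  · exact ha (h ▸ hd)

theorem image_sub {V : Type*} (G : SimpleGraph V) (E : Set (Sym2 V)) (r : Set V)
    (x : Sym2 r) (hx : x ∈ ((G.deleteEdges E).induce r).edgeSet) :
    Sym2.map (Subtype.val : r → V) x ∈ G.edgeSet := by
  induction x using Sym2.ind with | _ a b
  exact deleteEdges_le E hx

theorem preimage_sub {V : Type*} (G : SimpleGraph V) (u v : V) (r : Set V)
    (h : ¬ (u ∈ r ∧ v ∈ r)) (B : Set (Sym2 V)) (hB : B ⊆ G.edgeSet) :
    Sym2.map (Subtype.val : r → V) ⁻¹' B ⊆ ((G.deleteEdges {s(u, v)}).induce r).edgeSet := by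
  intro x hx
  have h1 := edge_notMem_image u v r h x
  have h2 := hB hx
  induction x using Sym2.ind with | _ a b
  simp only [mem_edgeSet, comap_adj, deleteEdges_adj]
  exact ⟨h2, h1⟩

/-- If `A` is a minimal edge cut of a connected finite simple graph `G` with `|A| = 1`,
and `G₁`, `G₂` are the two connected components of `G - A`, then
`y_G = y_{G₁} + y_{G₂}`. -/
theorem yMax_eq_add_of_minimal_edgeCut_card_one {V : Type*} [Finite V]
    (G : SimpleGraph V) (hG : G.Connected)
    (A : Set (Sym2 V)) (hA : A ⊆ G.edgeSet)
    (hdisc : ¬ (G.deleteEdges A).Connected)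
    (hmin : ∀ A' ⊂ A, (G.deleteEdges A').Connected)
    (hcard : A.ncard = 1)
    (c₁ c₂ : (G.deleteEdges A).ConnectedComponent) (hne : c₁ ≠ c₂)
    (htwo : ∀ c : (G.deleteEdges A).ConnectedComponent, c = c₁ ∨ c = c₂) :
    yMax G = yMax ((G.deleteEdges A).induce c₁.supp)
      + yMax ((G.deleteEdges A).induce c₂.supp) := by
  obtain ⟨e, rfl⟩ := Set.ncard_eq_one.1 hcard
  induction e using Sym2.ind with | _ u v
  have huv : ¬ (G.deleteEdges {s(u, v)}).Reachable u v := by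
    intro h
    exact hdisc (hG.connected_delete_edge_of_not_isBridge (fun hb => hb h))
  have hcl : ∀ c : (G.deleteEdges {s(u, v)}).ConnectedComponent, ∀ a b,
      (G.deleteEdges {s(u, v)}).Adj a b → a ∈ c.supp → b ∈ c.supp := by
    intro c a b hab ha
    rw [ConnectedComponent.mem_supp_iff] at ha ⊢
    rw [← ha]
    exact ConnectedComponent.sound hab.symm.reachable
  have hnot : ∀ c : (G.deleteEdges {s(u, v)}).ConnectedComponent,
      ¬ (u ∈ c.supp ∧ v ∈ c.supp) := by
    rintro c ⟨h1, h2⟩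
    rw [ConnectedComponent.mem_supp_iff] at h1 h2
    exact huv (ConnectedComponent.exact (h1.trans h2.symm))
  have hst : ∀ a, a ∈ c₁.supp → a ∉ c₂.supp := by
    intro a h1 h2
    rw [ConnectedComponent.mem_supp_iff] at h1 h2
    exact hne (h1.symm.trans h2)
  have hun : ∀ a, a ∈ c₁.supp ∨ a ∈ c₂.supp := fun a => htwo _
  have hsplit := yVal_split G u v c₁.supp c₂.supp (hcl c₁) (hcl c₂) hst hun (hnot c₁) (hnot c₂)
  obtain ⟨⟨B, hB, hBy⟩, hGmax⟩ := yMax_isGreatest G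
  obtain ⟨⟨B₁, hB₁, hBy₁⟩, hmax₁⟩ :=
    yMax_isGreatest ((G.deleteEdges {s(u, v)}).induce c₁.supp)
  obtain ⟨⟨B₂, hB₂, hBy₂⟩, hmax₂⟩ :=
    yMax_isGreatest ((G.deleteEdges {s(u, v)}).induce c₂.supp)
  have heG : s(u, v) ∈ G.edgeSet := hA rfl
  apply le_antisymm
  · have main : ∀ B ⊆ G.edgeSet, s(u, v) ∈ B → yVal G B ≤
        yMax ((G.deleteEdges {s(u, v)}).induce c₁.supp) +
        yMax ((G.deleteEdges {s(u, v)}).induce c₂.supp) := by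
      intro B hB he
      rw [hsplit B hB he]
      exact add_le_add (hmax₁ ⟨_, preimage_sub G u v _ (hnot c₁) B hB, rfl⟩)
        (hmax₂ ⟨_, preimage_sub G u v _ (hnot c₂) B hB, rfl⟩)
    rw [← hBy]
    by_cases he : s(u, v) ∈ B
    · exact main B hB he
    refine le_trans ?_ (main (insert s(u, v) B) (Set.insert_subset heG hB)
      (Set.mem_insert _ _))
    have hlt := numComp_lt (G.deleteEdges (insert s(u, v) B)) (G.deleteEdges B)
      (deleteEdges_anti (Set.subset_insert _ _)) u v
      (Adj.reachable (by rw [deleteEdges_adj]; exact ⟨heG, he⟩))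
      (fun h => huv (h.mono (deleteEdges_anti (by simp))))
    unfold yVal
    rw [Set.ncard_insert_of_notMem he]
    push_cast
    omega
  · let C : Set (Sym2 V) := insert s(u, v)
      (Sym2.map (Subtype.val : c₁.supp → V) '' B₁ ∪ Sym2.map (Subtype.val : c₂.supp → V) '' B₂)
    have hC : C ⊆ G.edgeSet := by
      rintro x (h | ⟨y, hy, rfl⟩ | ⟨y, hy, rfl⟩)
      · exact h ▸ heG
      · exact image_sub G _ _ y (hB₁ hy)
      · exact image_sub G _ _ y (hB₂ hy)
    have h1 : Sym2.map (Subtype.val : c₁.supp → V) ⁻¹' C = B₁ := by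
      ext x
      constructor
      · rintro (h | ⟨y, hy, h⟩ | ⟨y, hy, h⟩)
        · exact absurd h (edge_notMem_image u v _ (hnot c₁) x)
        · exact Sym2.map.injective Subtype.val_injective h ▸ hy
        · exact absurd h.symm (disj_image _ _ hst x y)
      · exact fun h => Or.inr (Or.inl ⟨x, h, rfl⟩)
    have h2 : Sym2.map (Subtype.val : c₂.supp → V) ⁻¹' C = B₂ := by
      ext x
      constructor
      · rintro (h | ⟨y, hy, h⟩ | ⟨y, hy, h⟩)
        · exact absurd h (edge_notMem_image u v _ (hnot c₂) x)
        · exact absurd h (disj_image _ _ hst y x)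
        · exact Sym2.map.injective Subtype.val_injective h ▸ hy
      · exact fun h => Or.inr (Or.inr ⟨x, h, rfl⟩)
    have := hsplit C hC (Set.mem_insert _ _)
    rw [h1, h2, hBy₁, hBy₂] at this
    rw [← this]
    exact hGmax ⟨C, hC, rfl⟩
end

section
/- Let G be a connected finite simple graph, let A be an edge subset of minimum cardinality among those satisfying y_G(A) = y_G, where y_G ≥ 2, let W ⊆ V(G) be a set of vertices inducing a complete subgraph of G, and let F be a connected component of G − A. If W is not contained in V(F), then |V(F) ∩ W| ≤ 1. -/
open SimpleGraph

/-- If every edge of `H'` either joins vertices in the same component of `H` or joins the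
components `c` and `d`, then `H'` has at most one component fewer than `H`. -/
theorem numComp_le_succ_of_merge {V : Type*} [Finite V] (H H' : SimpleGraph V)
    (c d : H.ConnectedComponent)
    (h : ∀ u v, H'.Adj u v →
      H.connectedComponentMk u = H.connectedComponentMk v ∨
      (H.connectedComponentMk u = c ∧ H.connectedComponentMk v = d) ∨
      (H.connectedComponentMk u = d ∧ H.connectedComponentMk v = c)) :
    numComp H ≤ numComp H' + 1 := by
  classical
  let f : H.ConnectedComponent → H.ConnectedComponent := fun e => if e = d then c else e
  have hadj : ∀ u v, H'.Adj u v →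
      f (H.connectedComponentMk u) = f (H.connectedComponentMk v) := by
    intro u v huv
    rcases h u v huv with h | ⟨h1, h2⟩ | ⟨h1, h2⟩
    · rw [h]
    · rw [h1, h2]; simp [f]
    · rw [h1, h2]; simp [f]
  have hwalk : ∀ u v (_ : H'.Walk u v),
      f (H.connectedComponentMk u) = f (H.connectedComponentMk v) := by
    intro u v p
    induction p with
    | nil => rfl
    | cons hh _ ih => exact (hadj _ _ hh).trans ih
  let g : H'.ConnectedComponent → H.ConnectedComponent :=
    SimpleGraph.ConnectedComponent.lift (fun v => f (H.connectedComponentMk v))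
      (fun u v p _ => hwalk u v p)
  let k : Option H'.ConnectedComponent → H.ConnectedComponent := fun o => o.elim d g
  have hk : Function.Surjective k := by
    intro e
    by_cases he : e = d
    · exact ⟨none, he.symm⟩
    · induction e using SimpleGraph.ConnectedComponent.ind with
      | _ v =>
        refine ⟨some (H'.connectedComponentMk v), ?_⟩
        change f (H.connectedComponentMk v) = _
        simp [f, he]
  have := Nat.card_le_card_of_surjective k hk
  rwa [Finite.card_option] at this

/-- If `A` is a smallest edge subset with `y_G(A) = y_G ≥ 2`, `W` induces a complete
subgraph of `G`, and `F` is a component of `G - A` with `W ⊄ V(F)`, then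
`|V(F) ∩ W| ≤ 1`. -/
theorem supp_inter_clique_card_le_one {V : Type*} [Finite V]
    (G : SimpleGraph V) (hG : G.Connected)
    (A : Set (Sym2 V)) (hA : A ⊆ G.edgeSet) (hy : yMax G = yVal G A)
    (hmin : ∀ B ⊆ G.edgeSet, yMax G = yVal G B → A.ncard ≤ B.ncard)
    (h2 : 2 ≤ yMax G)
    (W : Set V) (hW : G.IsClique W)
    (c : (G.deleteEdges A).ConnectedComponent)
    (hns : ¬ W ⊆ c.supp) :
    (c.supp ∩ W).ncard ≤ 1 := by
  by_contra hcon
  obtain ⟨x, ⟨hxc, hxW⟩, z, ⟨hzc, hzW⟩, hxz⟩ :=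
    (Set.one_lt_ncard_iff_nontrivial (s := c.supp ∩ W)).1 (not_le.1 hcon)
  obtain ⟨w, hwW, hwc⟩ := Set.not_subset.1 hns
  rw [ConnectedComponent.mem_supp_iff] at hxc hzc hwc
  have hmem : ∀ u ∈ W, (G.deleteEdges A).connectedComponentMk u = c → s(u, w) ∈ A := by
    intro u huW huc
    by_contra hn
    have huw : u ≠ w := by
      rintro rfl
      exact hwc huc
    have hadj : (G.deleteEdges A).Adj u w := by
      rw [deleteEdges_adj]
      exact ⟨hW huW hwW huw, hn⟩
    exact hwc ((ConnectedComponent.connectedComponentMk_eq_of_adj hadj).symm.trans huc)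
  have hxA := hmem x hxW hxc
  have hzA := hmem z hzW hzc
  have hne : s(x, w) ≠ s(z, w) := by
    intro h
    exact hxz (Sym2.congr_left.1 h)
  have hPA : ({s(x, w), s(z, w)} : Set (Sym2 V)) ⊆ A := by
    intro e he
    rcases he with rfl | rfl
    · exact hxA
    · exact hzA
  have hcard : (A \ {s(x, w), s(z, w)}).ncard + 2 = A.ncard := by
    rw [← Set.ncard_pair hne]
    exact Set.ncard_sdiff_add_ncard_of_subset hPA
  have hcomp : numComp (G.deleteEdges A) ≤
      numComp (G.deleteEdges (A \ {s(x, w), s(z, w)})) + 1 := by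
    refine numComp_le_succ_of_merge _ _ c ((G.deleteEdges A).connectedComponentMk w) ?_
    intro u v huv
    rw [deleteEdges_adj] at huv
    obtain ⟨hGuv, hnB⟩ := huv
    by_cases huvA : s(u, v) ∈ A
    · have hP : s(u, v) = s(x, w) ∨ s(u, v) = s(z, w) := by
        by_contra hn
        exact hnB ⟨huvA, hn⟩
      right
      rcases hP with h | h <;> rcases Sym2.eq_iff.1 h with ⟨rfl, rfl⟩ | ⟨rfl, rfl⟩
      · exact Or.inl ⟨hxc, rfl⟩
      · exact Or.inr ⟨rfl, hxc⟩
      · exact Or.inl ⟨hzc, rfl⟩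
      · exact Or.inr ⟨rfl, hzc⟩
    · left
      exact ConnectedComponent.connectedComponentMk_eq_of_adj
        ((deleteEdges_adj).2 ⟨hGuv, huvA⟩)
  have hBE : A \ {s(x, w), s(z, w)} ⊆ G.edgeSet := Set.sdiff_subset.trans hA
  have hbdd : BddAbove { y : ℤ | ∃ A ⊆ G.edgeSet, yVal G A = y } :=
    ((Set.toFinite {A : Set (Sym2 V) | A ⊆ G.edgeSet}).image (yVal G)).bddAbove
  have hle : yVal G (A \ {s(x, w), s(z, w)}) ≤ yMax G := le_csSup hbdd ⟨_, hBE, rfl⟩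
  have hge : yVal G A ≤ yVal G (A \ {s(x, w), s(z, w)}) := by
    unfold yVal
    omega
  have := hmin _ hBE (le_antisymm (hy.le.trans hge) hle)
  omega
end

section
/- If G is a connected finite simple graph, then x_G = y_G, i.e., the minimum over all spanning trees T of G of the number of connected components of G − E(T) equals the maximum over all edge subsets A ⊆ E(G) of 2·c(G − A) − |A| − 1. -/
open SimpleGraph

/-- `x_G`: the minimum, over all spanning trees `T` of `G`, of the number of connected
components of `G - E(T)`. -/
noncomputable def xMin {V : Type*} (G : SimpleGraph V) : ℕ :=
  sInf { m : ℕ | ∃ T : SimpleGraph V, T ≤ G ∧ T.IsTree ∧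
    numComp (G.deleteEdges T.edgeSet) = m }


/-- Matroid rank function axioms, for integer-valued set functions. -/
structure IsRk {E : Type*} [DecidableEq E] (f : Finset E → ℤ) : Prop where
  empty : f ∅ = 0
  lo : ∀ x A, f A ≤ f (insert x A)
  hi : ∀ x A, f (insert x A) ≤ f A + 1
  sub : ∀ A B, f (A ∪ B) + f (A ∩ B) ≤ f A + f B

theorem IsRk.contract {E : Type*} [DecidableEq E] {f : Finset E → ℤ} (hf : IsRk f) (e : E)
    (he : f {e} = 1) : IsRk (fun A => f (insert e A) - 1) where
  empty := by simp [he]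
  lo x A := by
    have := hf.lo x (insert e A)
    rw [Finset.insert_comm] at this
    linarith
  hi x A := by
    have := hf.hi x (insert e A)
    rw [Finset.insert_comm] at this
    linarith
  sub A B := by
    have := hf.sub (insert e A) (insert e B)
    rw [← Finset.insert_union_distrib, ← Finset.insert_inter_distrib] at this
    linarith

theorem IsRk.loop {E : Type*} [DecidableEq E] {f : Finset E → ℤ} (hf : IsRk f) {e : E}
    (he : f {e} ≠ 1) (A : Finset E) (hA : e ∉ A) : f (insert e A) ≤ f A := by
  have h1 := hf.lo e ∅
  have h2 := hf.hi e ∅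
  have h3 := hf.sub {e} A
  have h4 : ({e} : Finset E) ∩ A = ∅ := by grind
  have h5 : ({e} : Finset E) ∪ A = insert e A := rfl
  rw [h4, h5] at h3
  have h0 := hf.empty
  simp only [insert_empty_eq] at h1 h2
  have : f {e} = 0 := by omega
  linarith

/-- Matroid intersection theorem. -/
theorem matroid_inter {E : Type*} [DecidableEq E] (S : Finset E) :
    ∀ (f g : Finset E → ℤ), IsRk f → IsRk g → ∀ k : ℤ,
      (∀ X ⊆ S, k ≤ f X + g (S \ X)) →
      ∃ I ⊆ S, k ≤ I.card ∧ f I = I.card ∧ g I = I.card := by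
  induction S using Finset.induction_on with
  | empty =>
    intro f g hf hg k h
    have := h ∅ (by simp)
    refine ⟨∅, by simp, ?_, ?_, ?_⟩
    · simpa [hf.empty, hg.empty] using this
    · simp [hf.empty]
    · simp [hg.empty]
  | insert e S he ih =>
    intro f g hf hg k h
    by_cases c1 : ∀ X ⊆ S, k ≤ f X + g (S \ X)
    · obtain ⟨I, hI, h'⟩ := ih f g hf hg k c1
      exact ⟨I, hI.trans (Finset.subset_insert _ _), h'⟩
    push Not at c1
    obtain ⟨A, hA, hA'⟩ := c1
    have heA : e ∉ A := fun h => he (hA h)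
    have hfe : f {e} = 1 := by
      by_contra hne
      have h1 := hf.loop hne A heA
      have h2 := h (insert e A) (Finset.insert_subset_insert _ hA)
      have h3 : insert e S \ insert e A = S \ A := by grind
      rw [h3] at h2
      linarith
    have hge : g {e} = 1 := by
      by_contra hne
      have h1 := hg.loop hne (S \ A) (by simp [he])
      have h2 := h A (hA.trans (Finset.subset_insert _ _))
      have h3 : insert e S \ A = insert e (S \ A) := by grind
      rw [h3] at h2
      linarith
    by_cases c2 : ∀ X ⊆ S, k - 1 ≤ (f (insert e X) - 1) + (g (insert e (S \ X)) - 1)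
    · obtain ⟨I, hI, h1, h2, h3⟩ := ih _ _ (hf.contract e hfe) (hg.contract e hge) (k - 1) c2
      have heI : e ∉ I := fun h => he (hI h)
      refine ⟨insert e I, Finset.insert_subset_insert _ hI, ?_, ?_, ?_⟩ <;>
        rw [Finset.card_insert_of_notMem heI] <;> push_cast <;> linarith
    push Not at c2
    obtain ⟨B, hB, hB'⟩ := c2
    exfalso
    have heB : e ∉ B := fun h => he (hB h)
    have f1 := hf.sub A (insert e B)
    have g1 := hg.sub (S \ A) (insert e (S \ B))
    have h1 := h (A ∪ insert e B) (by grind)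
    have h2 := h (A ∩ insert e B) (by grind)
    have e1 : insert e S \ (A ∪ insert e B) = (S \ A) ∩ insert e (S \ B) := by grind
    have e2 : insert e S \ (A ∩ insert e B) = (S \ A) ∪ insert e (S \ B) := by grind
    rw [e1] at h1
    rw [e2] at h2
    linarith

section comp
variable {V : Type*}

/-- Functions constant along the edges of `S`. -/
def kerSp (S : Set (Sym2 V)) : Submodule ℚ (V → ℚ) where
  carrier := {f | ∀ u v, s(u, v) ∈ S → f u = f v}
  add_mem' := by
    intro a b ha hb u v h
    simp [ha u v h, hb u v h]
  zero_mem' := by intro u v h; rfl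
  smul_mem' := by
    intro c a ha u v h
    simp [ha u v h]

theorem mem_kerSp {S : Set (Sym2 V)} {f : V → ℚ} :
    f ∈ kerSp S ↔ ∀ u v, s(u, v) ∈ S → f u = f v := Iff.rfl

theorem kerSp_reach {S : Set (Sym2 V)} {f : V → ℚ} (hf : f ∈ kerSp S) {u v : V}
    (h : (fromEdgeSet S).Reachable u v) : f u = f v := by
  obtain ⟨w⟩ := h
  induction w with
  | nil => rfl
  | cons hadj _ ih => exact (hf _ _ ((fromEdgeSet_adj S).1 hadj).1).trans ih

/-- `kerSp S` is the space of functions on components. -/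
noncomputable def kerSpEquiv (S : Set (Sym2 V)) :
    ((fromEdgeSet S).ConnectedComponent → ℚ) ≃ₗ[ℚ] kerSp S where
  toFun f := ⟨fun v => f ((fromEdgeSet S).connectedComponentMk v), by
    intro u v h
    by_cases huv : u = v
    · rw [huv]
    · refine congrArg f (ConnectedComponent.sound ?_)
      exact Adj.reachable ((fromEdgeSet_adj S).2 ⟨h, huv⟩)⟩
  invFun g := fun c => g.1 c.out
  map_add' _ _ := rfl
  map_smul' _ _ := rfl
  left_inv f := by
    funext c
    exact congrArg f (Quot.out_eq c)
  right_inv g := by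
    ext v
    refine kerSp_reach g.2 ?_
    exact ConnectedComponent.exact (Quot.out_eq _)

variable [Finite V]

theorem numComp_eq (S : Set (Sym2 V)) :
    numComp (fromEdgeSet S) = Module.finrank ℚ (kerSp S) := by
  classical
  have := Fintype.ofFinite V
  have := Fintype.ofFinite (fromEdgeSet S).ConnectedComponent
  rw [← (kerSpEquiv S).finrank_eq, Module.finrank_fintype_fun_eq_card, numComp,
    Nat.card_eq_fintype_card]

/-- Number of components of the graph with edge set `S`. -/
noncomputable def cc (S : Set (Sym2 V)) : ℤ := numComp (fromEdgeSet S)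

theorem cc_anti {S T : Set (Sym2 V)} (h : S ⊆ T) : cc T ≤ cc S := by
  unfold cc
  rw [numComp_eq, numComp_eq]
  have h1 : kerSp T ≤ kerSp S := fun f hf u v huv => hf u v (h huv)
  exact_mod_cast Submodule.finrank_mono h1

theorem cc_super (S T : Set (Sym2 V)) : cc S + cc T ≤ cc (S ∪ T) + cc (S ∩ T) := by
  unfold cc
  simp only [numComp_eq]
  have h1 : kerSp (S ∪ T) = kerSp S ⊓ kerSp T := by
    ext f
    simp only [Submodule.mem_inf, mem_kerSp, Set.mem_union]
    grind
  have h2 : kerSp S ⊔ kerSp T ≤ kerSp (S ∩ T) :=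
    sup_le (fun f hf u v huv => hf u v huv.1) (fun f hf u v huv => hf u v huv.2)
  have h3 := Submodule.finrank_sup_add_finrank_inf_eq (kerSp S) (kerSp T)
  have h4 := Submodule.finrank_mono h2
  rw [h1]
  omega

theorem cc_insert (x : Sym2 V) (S : Set (Sym2 V)) : cc S ≤ cc (insert x S) + 1 := by
  unfold cc
  simp only [numComp_eq]
  induction x using Sym2.ind with
  | _ a b =>
  let φ : (V → ℚ) →ₗ[ℚ] ℚ := LinearMap.proj (R := ℚ) (φ := fun _ : V => ℚ) a -
    LinearMap.proj (R := ℚ) (φ := fun _ : V => ℚ) b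
  have h1 : kerSp S ⊓ LinearMap.ker φ ≤ kerSp (insert s(a, b) S) := by
    rintro f ⟨hf, hk⟩ u v huv
    have hk' : f a - f b = 0 := hk
    rcases huv with h | h
    · rcases Sym2.eq_iff.1 h with ⟨rfl, rfl⟩ | ⟨rfl, rfl⟩ <;> linarith
    · exact hf u v h
  have h2 := Submodule.finrank_mono h1
  have h3 := Submodule.finrank_sup_add_finrank_inf_eq (kerSp S) (LinearMap.ker φ)
  have h4 := Submodule.finrank_le (kerSp S ⊔ LinearMap.ker φ)
  have h5 := φ.finrank_range_add_finrank_ker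
  have h6 := Submodule.finrank_le (LinearMap.range φ)
  rw [Module.finrank_self] at h6
  omega

theorem cc_union (S B : Set (Sym2 V)) : cc S ≤ cc (S ∪ B) + B.ncard := by
  induction B, Set.toFinite B using Set.Finite.induction_on with
  | empty => simp
  | @insert a B ha hB ih =>
    rw [Set.ncard_insert_of_notMem ha hB, Set.union_insert]
    have := cc_insert a (S ∪ B)
    push_cast
    linarith

theorem cc_connected {G : SimpleGraph V} (h : G.Connected) : cc G.edgeSet = 1 := by
  unfold cc numComp
  rw [fromEdgeSet_edgeSet]
  have := h.preconnected.subsingleton_connectedComponent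
  have := h.nonempty
  have : Nonempty G.ConnectedComponent := ⟨G.connectedComponentMk (Classical.arbitrary V)⟩
  rw [Nat.card_eq_one_iff_unique.2 ⟨inferInstance, this⟩]
  rfl

theorem numComp_delete (G : SimpleGraph V) (A : Set (Sym2 V)) :
    (numComp (G.deleteEdges A) : ℤ) = cc (G.edgeSet \ A) := by
  unfold cc
  rw [← edgeSet_deleteEdges, fromEdgeSet_edgeSet]

theorem weak (G T : SimpleGraph V) (hT : T ≤ G) (hc : T.Connected) (A : Set (Sym2 V)) :
    yVal G A ≤ numComp (G.deleteEdges T.edgeSet) := by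
  unfold yVal
  rw [numComp_delete, numComp_delete]
  have hTG : T.edgeSet ⊆ G.edgeSet := edgeSet_subset_edgeSet.2 hT
  have h1 := cc_union (G.edgeSet \ A) (A ∩ T.edgeSet)
  have h2 := cc_union (G.edgeSet \ A) (A \ T.edgeSet)
  have h3 : cc ((G.edgeSet \ A) ∪ (A ∩ T.edgeSet)) ≤ cc T.edgeSet := cc_anti (by
    intro x hx
    by_cases hxA : x ∈ A
    · exact Or.inr ⟨hxA, hx⟩
    · exact Or.inl ⟨hTG hx, hxA⟩)
  have h4 : cc ((G.edgeSet \ A) ∪ (A \ T.edgeSet)) ≤ cc (G.edgeSet \ T.edgeSet) := cc_anti (by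
    rintro x ⟨hx, hx'⟩
    by_cases hxA : x ∈ A
    · exact Or.inr ⟨hxA, hx'⟩
    · exact Or.inl ⟨hx, hxA⟩)
  have h5 := Set.ncard_inter_add_ncard_sdiff_eq_ncard A T.edgeSet (Set.toFinite A)
  rw [cc_connected hc] at h3
  have h6 : ((A ∩ T.edgeSet).ncard : ℤ) + ((A \ T.edgeSet).ncard : ℤ) = A.ncard := by
    exact_mod_cast h5
  linarith

theorem isRk_graphic [DecidableEq V] : IsRk (fun A : Finset (Sym2 V) => cc (∅ : Set (Sym2 V)) - cc (A : Set (Sym2 V))) where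
  empty := by simp
  lo x A := by
    have := cc_anti (Finset.coe_subset.2 (Finset.subset_insert x A))
    linarith
  hi x A := by
    have := cc_insert x (A : Set (Sym2 V))
    rw [Finset.coe_insert]
    linarith
  sub A B := by
    have := cc_super (A : Set (Sym2 V)) B
    rw [Finset.coe_union, Finset.coe_inter]
    linarith
end comp

theorem IsRk.dual {E : Type*} [DecidableEq E] {f : Finset E → ℤ} (hf : IsRk f) (S : Finset E) :
    IsRk (fun A => (A.card : ℤ) + f (S \ A) - f S) where
  empty := by simp
  lo x A := by
    by_cases hx : x ∈ S \ A
    · have h1 := hf.hi x (S \ insert x A)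
      have h2 : insert x (S \ insert x A) = S \ A := by grind
      have h3 : x ∉ A := by grind
      rw [h2] at h1
      rw [Finset.card_insert_of_notMem h3]
      push_cast
      linarith
    · have h2 : S \ insert x A = S \ A := by grind
      have h3 : (A.card : ℤ) ≤ (insert x A).card := by
        exact_mod_cast Finset.card_le_card (Finset.subset_insert x A)
      rw [h2]
      linarith
  hi x A := by
    have h3 : ((insert x A).card : ℤ) ≤ A.card + 1 := by
      exact_mod_cast Finset.card_insert_le x A
    by_cases hx : x ∈ S \ A
    · have h1 := hf.lo x (S \ insert x A)
      have h2 : insert x (S \ insert x A) = S \ A := by grind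
      rw [h2] at h1
      linarith
    · have h2 : S \ insert x A = S \ A := by grind
      rw [h2]
      linarith
  sub A B := by
    have h1 := hf.sub (S \ A) (S \ B)
    have h2 : (S \ A) ∪ (S \ B) = S \ (A ∩ B) := by grind
    have h3 : (S \ A) ∩ (S \ B) = S \ (A ∪ B) := by grind
    rw [h2, h3] at h1
    have h4 : ((A ∪ B).card : ℤ) + (A ∩ B).card = A.card + B.card := by
      exact_mod_cast Finset.card_union_add_card_inter A B
    linarith

theorem connected_of_cc {V : Type*} [Finite V] [Nonempty V] {G : SimpleGraph V}
    (h : cc G.edgeSet = 1) : G.Connected := by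
  unfold cc numComp at h
  rw [fromEdgeSet_edgeSet] at h
  have h' : Nat.card G.ConnectedComponent = 1 := by exact_mod_cast h
  have := (Nat.card_eq_one_iff_unique.1 h').1
  refine ⟨fun u v => ConnectedComponent.exact (Subsingleton.elim _ _)⟩

theorem strong {V : Type*} [Finite V] (G : SimpleGraph V) (hG : G.Connected) (k : ℤ)
    (hk : ∀ A ⊆ G.edgeSet, yVal G A ≤ k) :
    ∃ T ≤ G, T.IsTree ∧ (numComp (G.deleteEdges T.edgeSet) : ℤ) ≤ k := by
  classical
  have := hG.nonempty
  obtain ⟨S, hS⟩ := (Set.toFinite G.edgeSet).exists_finset_coe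
  have hf := isRk_graphic (V := V)
  obtain ⟨I, hIS, h1, h2, h3⟩ := matroid_inter S _ _ hf (hf.dual S)
    (cc (∅ : Set (Sym2 V)) - k) (by
      intro X hX
      have hy := hk ((S \ X : Finset (Sym2 V)) : Set (Sym2 V)) (by
        rw [← hS]; exact Finset.coe_subset.2 Finset.sdiff_subset)
      unfold yVal at hy
      rw [numComp_delete, ← hS, ← Finset.coe_sdiff, Finset.sdiff_sdiff_eq_self hX,
        Set.ncard_coe_finset] at hy
      have hc := cc_connected hG
      rw [← hS] at hc
      simp only [Finset.sdiff_sdiff_eq_self hX, hc]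
      linarith)
  have hc := cc_connected hG
  simp only [hS, hc, Finset.coe_sdiff] at h3
  have hconn : (G.deleteEdges (I : Set (Sym2 V))).Connected := by
    apply connected_of_cc
    rw [edgeSet_deleteEdges]
    linarith
  obtain ⟨T, hT, hTt⟩ := hconn.exists_isTree_le
  refine ⟨T, hT.trans (deleteEdges_le _), hTt, ?_⟩
  rw [numComp_delete]
  have hanti : cc (G.edgeSet \ T.edgeSet) ≤ cc (I : Set (Sym2 V)) := cc_anti (by
    intro x hx
    refine ⟨?_, fun hxT => ?_⟩
    · rw [← hS]; exact hIS hx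
    · have := edgeSet_subset_edgeSet.2 hT hxT
      rw [edgeSet_deleteEdges] at this
      exact this.2 hx)
  linarith

/-- Nebeský's theorem: for a connected finite simple graph `G`, `x_G = y_G`. -/
theorem xMin_eq_yMax {V : Type*} [Finite V] (G : SimpleGraph V) (hG : G.Connected) :
    (xMin G : ℤ) = yMax G := by
  obtain ⟨T0, hT0, hT0t⟩ := hG.exists_isTree_le
  have hne : { m : ℕ | ∃ T : SimpleGraph V, T ≤ G ∧ T.IsTree ∧
    numComp (G.deleteEdges T.edgeSet) = m }.Nonempty := ⟨_, T0, hT0, hT0t, rfl⟩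
  obtain ⟨T, hT, hTt, hTm⟩ := Nat.sInf_mem hne
  have hx : numComp (G.deleteEdges T.edgeSet) = xMin G := hTm
  have hbdd : BddAbove { y : ℤ | ∃ A ⊆ G.edgeSet, yVal G A = y } := by
    refine ⟨xMin G, ?_⟩
    rintro y ⟨A, -, rfl⟩
    rw [← hx]
    exact weak G T hT hTt.connected A
  have hyne : { y : ℤ | ∃ A ⊆ G.edgeSet, yVal G A = y }.Nonempty :=
    ⟨_, ∅, Set.empty_subset _, rfl⟩
  apply le_antisymm
  · obtain ⟨T', hT', hTt', hle⟩ := strong G hG (yMax G)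
      (fun A hA => le_csSup hbdd ⟨A, hA, rfl⟩)
    refine le_trans ?_ hle
    have hmin : xMin G ≤ numComp (G.deleteEdges T'.edgeSet) :=
      Nat.sInf_le ⟨T', hT', hTt', rfl⟩
    exact_mod_cast hmin
  · apply csSup_le hyne
    rintro y ⟨A, -, rfl⟩
    rw [← hx]
    exact weak G T hT hTt.connected A
end

section
/- If G is a connected finite simple graph, then ξ(G) = max_{A ⊆ E(G)} (c(G − A) + b(G − A) − |A| − 1), where ξ(G) is the minimum over all spanning trees T of G of the number of connected components of G − E(T) having an odd number of edges, and b(G − A) is the number of connected components of G − A with odd Betti number. -/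
open SimpleGraph

/-- The number of connected components of `H` having an odd number of edges. -/
noncomputable def numOddEdgeComps {V : Type*} (H : SimpleGraph V) : ℕ :=
  {c : H.ConnectedComponent | Odd ((H.induce c.supp).edgeSet.ncard)}.ncard

/-- `ξ(G)`: the minimum, over all spanning trees `T` of `G`, of the number of connected
components of `G - E(T)` having an odd number of edges. -/
noncomputable def xi {V : Type*} (G : SimpleGraph V) : ℕ :=
  sInf { m : ℕ | ∃ T : SimpleGraph V, T ≤ G ∧ T.IsTree ∧
    numOddEdgeComps (G.deleteEdges T.edgeSet) = m }

/-- `b(H)`: the number of connected components `C` of `H` with odd Betti number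
`β(C) = |E(C)| - |V(C)| + 1`. -/
noncomputable def numOddBettiComps {V : Type*} (H : SimpleGraph V) : ℕ :=
  {c : H.ConnectedComponent |
    Odd (((H.induce c.supp).edgeSet.ncard : ℤ) - (c.supp.ncard : ℤ) + 1)}.ncard


namespace Neb

section core
set_option linter.unusedSectionVars false
set_option linter.unusedVariables false
open Classical Finset

variable {V : Type*} [Fintype V]

/-- The graph spanned by a finite set of edges. -/
noncomputable def gr (S : Finset (Sym2 V)) : SimpleGraph V :=
  SimpleGraph.fromEdgeSet (S : Set (Sym2 V))

def Rch (S : Finset (Sym2 V)) (u v : V) : Prop := (gr S).Reachable u v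

theorem Rch.refl (S : Finset (Sym2 V)) (u : V) : Rch S u u := Reachable.refl u
theorem Rch.symm {S : Finset (Sym2 V)} {u v : V} (h : Rch S u v) : Rch S v u :=
  Reachable.symm h
theorem Rch.trans {S : Finset (Sym2 V)} {u v w : V} (h : Rch S u v) (h' : Rch S v w) :
    Rch S u w := Reachable.trans h h'

theorem Rch.of_mem {S : Finset (Sym2 V)} {u v : V} (h : s(u, v) ∈ S) : Rch S u v := by
  by_cases huv : u = v
  · subst huv; exact Rch.refl _ _
  · exact Adj.reachable (by simp [gr, h, huv])

/-- Induction principle: any equivalence containing the edges contains reachability. -/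
theorem Rch.le {S : Finset (Sym2 V)} {R : V → V → Prop} (hr : ∀ x, R x x)
    (ht : ∀ x y z, R x y → R y z → R x z) (he : ∀ x y, s(x, y) ∈ S → R x y) {u v : V}
    (h : Rch S u v) : R u v := by
  obtain ⟨p⟩ := h
  induction p with
  | nil => exact hr _
  | cons hadj p ih =>
    refine ht _ _ _ (he _ _ ?_) ih
    simp [gr] at hadj
    exact hadj.1

theorem Rch.mono {S S' : Finset (Sym2 V)} (hS : S ⊆ S') {u v : V} (h : Rch S u v) :
    Rch S' u v :=
  Rch.le (Rch.refl S') (fun _ _ _ => Rch.trans) (fun _ _ h => Rch.of_mem (hS h)) h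

theorem rch_insert {S : Finset (Sym2 V)} {u v x y : V} :
    Rch (insert s(u, v) S) x y ↔
      Rch S x y ∨ (Rch S x u ∧ Rch S v y) ∨ (Rch S x v ∧ Rch S u y) := by
  constructor
  · intro h
    refine Rch.le (R := fun x y => Rch S x y ∨ (Rch S x u ∧ Rch S v y) ∨
      (Rch S x v ∧ Rch S u y)) ?_ ?_ ?_ h
    · intro x; exact Or.inl (Rch.refl _ _)
    · rintro x y z (h1 | ⟨h1, h2⟩ | ⟨h1, h2⟩) (h3 | ⟨h3, h4⟩ | ⟨h3, h4⟩)
      · exact Or.inl (h1.trans h3)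
      · exact Or.inr (Or.inl ⟨h1.trans h3, h4⟩)
      · exact Or.inr (Or.inr ⟨h1.trans h3, h4⟩)
      · exact Or.inr (Or.inl ⟨h1, h2.trans h3⟩)
      · exact Or.inr (Or.inl ⟨h1, h4⟩)
      · exact Or.inl (h1.trans h4)
      · exact Or.inr (Or.inr ⟨h1, h2.trans h3⟩)
      · exact Or.inl (h1.trans h4)
      · exact Or.inr (Or.inr ⟨h1, h4⟩)
    · intro x y hxy
      rw [mem_insert] at hxy
      rcases hxy with hxy | hxy
      · rw [Sym2.eq_iff] at hxy
        rcases hxy with ⟨rfl, rfl⟩ | ⟨rfl, rfl⟩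
        · exact Or.inr (Or.inl ⟨Rch.refl _ _, Rch.refl _ _⟩)
        · exact Or.inr (Or.inr ⟨Rch.refl _ _, Rch.refl _ _⟩)
      · exact Or.inl (Rch.of_mem hxy)
  · have hm : ∀ {a b}, Rch S a b → Rch (insert s(u, v) S) a b :=
      fun h => h.mono (subset_insert _ _)
    have huv : Rch (insert s(u, v) S) u v := Rch.of_mem (mem_insert_self _ _)
    rintro (h | ⟨h1, h2⟩ | ⟨h1, h2⟩)
    · exact hm h
    · exact (hm h1).trans (huv.trans (hm h2))
    · exact (hm h1).trans (huv.symm.trans (hm h2))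

noncomputable def cls (S : Finset (Sym2 V)) (v : V) : Finset V := univ.filter (fun x => Rch S v x)

theorem mem_cls {S : Finset (Sym2 V)} {v x : V} : x ∈ cls S v ↔ Rch S v x := by simp [cls]

theorem self_mem_cls (S : Finset (Sym2 V)) (v : V) : v ∈ cls S v := mem_cls.2 (Rch.refl _ _)

theorem cls_eq {S : Finset (Sym2 V)} {v x : V} : cls S v = cls S x ↔ Rch S v x := by
  constructor
  · intro h
    rw [← mem_cls, h]; exact self_mem_cls _ _
  · intro h; ext y; rw [mem_cls, mem_cls]
    exact ⟨fun h' => h.symm.trans h', fun h' => h.trans h'⟩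

theorem cls_disj {S : Finset (Sym2 V)} {v x : V} (h : ¬ Rch S v x) :
    Disjoint (cls S v) (cls S x) := by
  rw [Finset.disjoint_left]; intro y h1 h2
  exact h ((mem_cls.1 h1).trans (mem_cls.1 h2).symm)

noncomputable def comps (S : Finset (Sym2 V)) : Finset (Finset V) := univ.image (cls S)

theorem mem_comps {S : Finset (Sym2 V)} {K : Finset V} : K ∈ comps S ↔ ∃ v, cls S v = K := by
  simp [comps]

theorem cls_mem_comps (S : Finset (Sym2 V)) (v : V) : cls S v ∈ comps S := mem_comps.2 ⟨v, rfl⟩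

theorem eq_cls_of_mem {S : Finset (Sym2 V)} {K : Finset V} (hK : K ∈ comps S) {x : V}
    (hx : x ∈ K) : K = cls S x := by
  obtain ⟨v, rfl⟩ := mem_comps.1 hK
  exact cls_eq.2 (mem_cls.1 hx)

/-- sum of a function over the components -/
noncomputable def Phi (S : Finset (Sym2 V)) (g : Finset V → ℤ) : ℤ := ∑ K ∈ comps S, g K

theorem comps_insert_of_rch {S : Finset (Sym2 V)} {u v : V} (h : Rch S u v) :
    comps (insert s(u, v) S) = comps S := by
  have : cls (insert s(u, v) S) = cls S := by
    funext x; ext y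
    rw [mem_cls, mem_cls, rch_insert]
    constructor
    · rintro (h' | ⟨h1, h2⟩ | ⟨h1, h2⟩)
      · exact h'
      · exact h1.trans (h.trans h2)
      · exact h1.trans (h.symm.trans h2)
    · exact Or.inl
  rw [comps, comps, this]

theorem comps_insert_of_not_rch {S : Finset (Sym2 V)} {u v : V} (h : ¬ Rch S u v) :
    comps (insert s(u, v) S) =
      insert (cls S u ∪ cls S v) (((comps S).erase (cls S u)).erase (cls S v)) := by
  have hcl : ∀ x, cls (insert s(u, v) S) x =
      if Rch S x u ∨ Rch S x v then cls S u ∪ cls S v else cls S x := by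
    intro x
    ext y
    rw [mem_cls, rch_insert]
    split_ifs with hx
    · rw [mem_union, mem_cls, mem_cls]
      rcases hx with hx | hx
      · constructor
        · rintro (h' | ⟨h1, h2⟩ | ⟨h1, h2⟩)
          · exact Or.inl (hx.symm.trans h')
          · exact Or.inr h2
          · exact Or.inl h2
        · rintro (h' | h')
          · exact Or.inl (hx.trans h')
          · exact Or.inr (Or.inl ⟨hx, h'⟩)
      · constructor
        · rintro (h' | ⟨h1, h2⟩ | ⟨h1, h2⟩)
          · exact Or.inr (hx.symm.trans h')
          · exact Or.inr h2
          · exact Or.inl h2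
        · rintro (h' | h')
          · exact Or.inr (Or.inr ⟨hx, h'⟩)
          · exact Or.inl (hx.trans h')
    · push Not at hx
      rw [mem_cls]
      constructor
      · rintro (h' | ⟨h1, h2⟩ | ⟨h1, h2⟩)
        · exact h'
        · exact absurd h1 hx.1
        · exact absurd h1 hx.2
      · exact Or.inl
  ext K
  rw [mem_comps, mem_insert, mem_erase, mem_erase, mem_comps]
  constructor
  · rintro ⟨x, rfl⟩
    rw [hcl]
    split_ifs with hx
    · exact Or.inl rfl
    · push Not at hx
      refine Or.inr ⟨?_, ?_, x, rfl⟩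
      · rw [Ne, cls_eq]; exact hx.2
      · rw [Ne, cls_eq]; exact hx.1
  · rintro (rfl | ⟨h1, h2, x, rfl⟩)
    · exact ⟨u, by rw [hcl, if_pos (Or.inl (Rch.refl _ _))]⟩
    · refine ⟨x, ?_⟩
      rw [hcl, if_neg]
      rw [Ne, cls_eq] at h1 h2
      tauto

theorem Phi_insert_of_rch {S : Finset (Sym2 V)} {u v : V} (h : Rch S u v) (g : Finset V → ℤ) :
    Phi (insert s(u, v) S) g = Phi S g := by
  rw [Phi, comps_insert_of_rch h, Phi]

theorem Phi_insert_of_not_rch {S : Finset (Sym2 V)} {u v : V} (h : ¬ Rch S u v)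
    (g : Finset V → ℤ) :
    Phi (insert s(u, v) S) g = Phi S g - g (cls S u) - g (cls S v) + g (cls S u ∪ cls S v) := by
  rw [Phi, comps_insert_of_not_rch h, sum_insert, Phi]
  · have h1 : cls S v ∈ (comps S).erase (cls S u) :=
      mem_erase.2 ⟨fun h' => h (cls_eq.1 h').symm, cls_mem_comps _ _⟩
    have e1 := Finset.add_sum_erase _ g h1
    have e2 := Finset.add_sum_erase _ g (cls_mem_comps S u)
    linarith
  · intro hm
    have hm' := (mem_erase.1 (mem_erase.1 hm).2)
    apply hm'.1
    rw [eq_cls_of_mem hm'.2 (mem_union_left _ (self_mem_cls S u))]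

/-- total weight of a set -/
noncomputable def sm (p : V → ZMod 2) (K : Finset V) : ZMod 2 := ∑ x ∈ K, p x

theorem sm_add (p q : V → ZMod 2) (K : Finset V) : sm (p + q) K = sm p K + sm q K := by
  simp [sm, sum_add_distrib]

/-- indicator of odd -/
def od (a : ZMod 2) : ℤ := if a = 1 then 1 else 0

noncomputable def cc (S : Finset (Sym2 V)) : ℤ := Phi S (fun _ => 1)
noncomputable def oddc (S : Finset (Sym2 V)) (p : V → ZMod 2) : ℤ := Phi S (fun K => od (sm p K))

theorem zcases (a : ZMod 2) : a = 0 ∨ a = 1 := by revert a; decide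

theorem cc_insert_of_rch {S : Finset (Sym2 V)} {u v : V} (h : Rch S u v) :
    cc (insert s(u, v) S) = cc S := Phi_insert_of_rch h _

theorem cc_insert_of_not_rch {S : Finset (Sym2 V)} {u v : V} (h : ¬ Rch S u v) :
    cc (insert s(u, v) S) = cc S - 1 := by
  rw [cc, Phi_insert_of_not_rch h, cc]; ring

theorem oddc_insert_of_rch {S : Finset (Sym2 V)} {u v : V} (h : Rch S u v) (p : V → ZMod 2) :
    oddc (insert s(u, v) S) p = oddc S p := Phi_insert_of_rch h _

theorem oddc_insert_of_not_rch {S : Finset (Sym2 V)} {u v : V} (h : ¬ Rch S u v)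
    (p : V → ZMod 2) :
    oddc (insert s(u, v) S) p = oddc S p - od (sm p (cls S u)) - od (sm p (cls S v))
      + od (sm p (cls S u) + sm p (cls S v)) := by
  rw [oddc, Phi_insert_of_not_rch h, oddc]
  congr 2
  simp only [sm]
  rw [sum_union (cls_disj h)]

/-- The indicator weight of a vertex. -/
noncomputable def dl (v : V) : V → ZMod 2 := Pi.single v 1

theorem sm_dl (v : V) (K : Finset V) : sm (dl v) K = if v ∈ K then 1 else 0 := by
  simp [sm, dl, Pi.single_apply]

theorem mem_comp_iff {S : Finset (Sym2 V)} {K : Finset V} (hK : K ∈ comps S) (v : V) :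
    v ∈ K ↔ K = cls S v :=
  ⟨eq_cls_of_mem hK, fun h => h ▸ self_mem_cls S v⟩

theorem oddc_add_dl (S : Finset (Sym2 V)) (p : V → ZMod 2) (v : V) :
    oddc S (p + dl v) = oddc S p - od (sm p (cls S v)) + od (sm p (cls S v) + 1) := by
  have h1 := Finset.add_sum_erase (comps S) (fun K => od (sm p K)) (cls_mem_comps S v)
  have h2 := Finset.add_sum_erase (comps S) (fun K => od (sm (p + dl v) K)) (cls_mem_comps S v)
  have h3 : ∑ K ∈ (comps S).erase (cls S v), od (sm (p + dl v) K) =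
      ∑ K ∈ (comps S).erase (cls S v), od (sm p K) := by
    refine sum_congr rfl fun K hK => ?_
    rw [mem_erase] at hK
    rw [sm_add, sm_dl, if_neg, add_zero]
    rw [mem_comp_iff hK.2]; exact hK.1
  simp only [oddc, Phi]
  rw [← h1, ← h2, h3]
  simp only [sm_add, sm_dl, if_pos (self_mem_cls S v)]
  ring

theorem oddc_congr {S : Finset (Sym2 V)} {p q : V → ZMod 2}
    (h : ∀ K ∈ comps S, sm p K = sm q K) : oddc S p = oddc S q := by
  simp only [oddc, Phi]
  exact sum_congr rfl fun K hK => by rw [h K hK]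

theorem oddc_add_dl_congr {S : Finset (Sym2 V)} (p : V → ZMod 2) {u v : V} (h : Rch S u v) :
    oddc S (p + dl u) = oddc S (p + dl v) := by
  rw [oddc_add_dl, oddc_add_dl, cls_eq.2 h]

theorem od_bound (a : ZMod 2) : 0 ≤ od a ∧ od a ≤ 1 := by revert a; decide
theorem od_flip (a : ZMod 2) : od (a + 1) = 1 - od a := by revert a; decide
theorem od_add (a b : ZMod 2) : od (a + b) ≤ od a + od b := by revert a b; decide
theorem od_merge (a b : ZMod 2) : od a + od b - 2 ≤ od (a + b) := by revert a b; decide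
theorem od_merge' (a b : ZMod 2) : od a + od b - 1 ≤ od (a + 1 + b) := by revert a b; decide
theorem od_cast (a : ZMod 2) : ((od a : ℤ) : ZMod 2) = a := by revert a; decide
theorem od_sub (a b : ZMod 2) : od (a + b) ≤ od a + od b := by revert a b; decide

/-- first endpoint of an edge -/
noncomputable def e1 (e : Sym2 V) : V := (Quot.out e).1
noncomputable def e2 (e : Sym2 V) : V := (Quot.out e).2
theorem e_eq (e : Sym2 V) : s(e1 e, e2 e) = e := by
  change Quot.mk _ ((Quot.out e).1, (Quot.out e).2) = e
  exact Quot.out_eq e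

noncomputable def sg (S : Finset (Sym2 V)) : V → ZMod 2 := ∑ e ∈ S, dl (e1 e)

theorem sg_insert {S : Finset (Sym2 V)} {e : Sym2 V} (h : e ∉ S) :
    sg (insert e S) = dl (e1 e) + sg S := by
  rw [sg, sum_insert h, sg]

theorem sg_union {S T : Finset (Sym2 V)} (h : Disjoint S T) : sg (S ∪ T) = sg S + sg T := by
  rw [sg, sum_union h, sg, sg]

theorem sm_univ_sg (S : Finset (Sym2 V)) : sm (sg S) univ = (#S : ZMod 2) := by
  induction S using Finset.induction_on with
  | empty => simp [sg, sm]
  | insert e S he ih => rw [sg_insert he, sm_add, ih, sm_dl, card_insert_of_notMem he]; simp [add_comm]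

theorem zz (p : V → ZMod 2) : p + p = 0 := by
  funext x; simp only [Pi.add_apply, Pi.zero_apply]; generalize p x = a; revert a; decide

/-- L1 one step and in general. -/
theorem oddc_insert_le (S : Finset (Sym2 V)) (e : Sym2 V) (p : V → ZMod 2) :
    oddc (insert e S) p ≤ oddc S p := by
  rw [← e_eq e]
  by_cases h : Rch S (e1 e) (e2 e)
  · rw [oddc_insert_of_rch h]
  · rw [oddc_insert_of_not_rch h]
    have := od_add (sm p (cls S (e1 e))) (sm p (cls S (e2 e)))
    linarith

theorem oddc_union_le (S T : Finset (Sym2 V)) (p : V → ZMod 2) :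
    oddc (S ∪ T) p ≤ oddc S p := by
  induction T using Finset.induction_on with
  | empty => simp
  | insert e T he ih => rw [union_insert]; exact (oddc_insert_le _ _ _).trans ih

theorem oddc_mono {S T : Finset (Sym2 V)} (h : S ⊆ T) (p : V → ZMod 2) :
    oddc T p ≤ oddc S p := by
  rw [← union_eq_right.2 h]; exact oddc_union_le _ _ _

/-- L5 -/
theorem oddc_insert_ge (S : Finset (Sym2 V)) (e : Sym2 V) (p : V → ZMod 2) :
    oddc S p - 1 ≤ oddc (insert e S) (p + dl (e1 e)) := by
  by_cases h : Rch S (e1 e) (e2 e)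
  · rw [← e_eq e, oddc_insert_of_rch h, e_eq, oddc_add_dl, od_flip]
    have := od_bound (sm p (cls S (e1 e)))
    linarith
  · rw [← e_eq e, oddc_insert_of_not_rch h, e_eq, oddc_add_dl]
    simp only [sm_add, sm_dl, if_pos (self_mem_cls S (e1 e))]
    rw [if_neg, add_zero]
    · have := od_merge' (sm p (cls S (e1 e))) (sm p (cls S (e2 e)))
      linarith
    · rw [mem_cls]; exact fun h' => h h'.symm

theorem oddc_union_ge {S X : Finset (Sym2 V)} (p : V → ZMod 2) :
    oddc S p - #X ≤ oddc (S ∪ X) (p + sg X) := by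
  induction X using Finset.induction_on with
  | empty => simp [sg]
  | insert e X he ih =>
    rw [union_insert, sg_insert he, card_insert_of_notMem he]
    have := oddc_insert_ge (S ∪ X) e (p + sg X)
    rw [show p + (dl (e1 e) + sg X) = p + sg X + dl (e1 e) by ring]
    push_cast; linarith

theorem cc_insert_le (S : Finset (Sym2 V)) (e : Sym2 V) : cc (insert e S) ≤ cc S := by
  rw [← e_eq e]
  by_cases h : Rch S (e1 e) (e2 e)
  · rw [cc_insert_of_rch h]
  · rw [cc_insert_of_not_rch h]; linarith

theorem cc_union_le (S T : Finset (Sym2 V)) : cc (S ∪ T) ≤ cc S := by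
  induction T using Finset.induction_on with
  | empty => simp
  | insert e T he ih => rw [union_insert]; exact (cc_insert_le _ _).trans ih

theorem cc_mono {S T : Finset (Sym2 V)} (h : S ⊆ T) : cc T ≤ cc S := by
  rw [← union_eq_right.2 h]; exact cc_union_le _ _

theorem cc_union_ge (S T : Finset (Sym2 V)) : cc S ≤ cc (S ∪ T) + #T := by
  induction T using Finset.induction_on with
  | empty => simp
  | insert e T he ih =>
    rw [union_insert, card_insert_of_notMem he]
    have : cc (S ∪ T) ≤ cc (insert e (S ∪ T)) + 1 := by
      rw [← e_eq e]
      by_cases h : Rch (S ∪ T) (e1 e) (e2 e)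
      · rw [cc_insert_of_rch h]; linarith
      · rw [cc_insert_of_not_rch h]; linarith
    push_cast; linarith

/-- L6 -/
theorem oddc_cc_insert (S : Finset (Sym2 V)) (e : Sym2 V) (p : V → ZMod 2) :
    oddc S p - 2 * cc S ≤ oddc (insert e S) p - 2 * cc (insert e S) := by
  rw [← e_eq e]
  by_cases h : Rch S (e1 e) (e2 e)
  · rw [oddc_insert_of_rch h, cc_insert_of_rch h]
  · rw [oddc_insert_of_not_rch h, cc_insert_of_not_rch h]
    have := od_bound (sm p (cls S (e1 e)))
    have := od_bound (sm p (cls S (e2 e)))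
    have := od_bound (sm p (cls S (e1 e)) + sm p (cls S (e2 e)))
    linarith

theorem oddc_cc_mono {S T : Finset (Sym2 V)} (h : S ⊆ T) (p : V → ZMod 2) :
    oddc S p - 2 * cc S ≤ oddc T p - 2 * cc T := by
  rw [← union_eq_right.2 h]
  clear h
  induction T using Finset.induction_on with
  | empty => simp
  | insert e T he ih => rw [union_insert]; exact ih.trans (oddc_cc_insert _ _ _)

theorem cls_empty (v : V) : cls (∅ : Finset (Sym2 V)) v = {v} := by
  ext x
  rw [mem_cls, mem_singleton]
  constructor
  · intro h
    exact Rch.le (R := fun x y => y = x) (fun _ => rfl) (fun _ _ _ h h' => h'.trans h)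
      (fun _ _ h => by simp at h) h
  · rintro rfl; exact Rch.refl _ _

theorem Phi_empty (g : Finset V → ℤ) : Phi ∅ g = ∑ v : V, g {v} := by
  rw [Phi, comps, sum_image]
  · simp [cls_empty]
  · intro x _ y _ h; simpa [cls_empty] using h

theorem cc_empty : cc (∅ : Finset (Sym2 V)) = Fintype.card V := by
  rw [cc, Phi_empty]; simp

theorem oddc_empty (p : V → ZMod 2) : oddc ∅ p = ∑ v, od (p v) := by
  rw [oddc, Phi_empty]; simp [sm]

theorem oddc_parity (S : Finset (Sym2 V)) (p : V → ZMod 2) :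
    ((oddc S p : ℤ) : ZMod 2) = sm p univ := by
  induction S using Finset.induction_on with
  | empty => rw [oddc_empty]; push_cast; simp [od_cast, sm]
  | insert e S he ih =>
    rw [← e_eq e]
    by_cases h : Rch S (e1 e) (e2 e)
    · rw [oddc_insert_of_rch h, ih]
    · rw [oddc_insert_of_not_rch h]; push_cast; rw [ih]; simp only [od_cast]; ring

theorem oddc_subadd (S : Finset (Sym2 V)) (p q : V → ZMod 2) :
    oddc S (p + q) ≤ oddc S p + oddc S q := by
  simp only [oddc, Phi]
  rw [← sum_add_distrib]
  exact sum_le_sum fun K _ => by rw [sm_add]; exact od_add _ _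

/-- The value of an edge set `A`. -/
noncomputable def val (E : Finset (Sym2 V)) (w : V → ZMod 2) (A : Finset (Sym2 V)) : ℤ :=
  2 * cc (E \ A) - oddc (E \ A) (sg (E \ A) + w) - #A - cc E

/-- Easy direction. -/
theorem easy {E F A : Finset (Sym2 V)} (w : V → ZMod 2) (hF : F ⊆ E) (hA : A ⊆ E)
    (hFE : cc F = cc E) (hFc : (#F : ℤ) + cc E = Fintype.card V) :
    val E w A ≤ oddc (E \ F) (sg (E \ F) + w + 1) := by
  have hEF : E \ F = ((E \ A) \ F) ∪ (A \ F) := by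
    ext e; simp only [mem_sdiff, mem_union]
    have := @hA e; tauto
  have hdis : Disjoint ((E \ A) \ F) (A \ F) := by
    rw [Finset.disjoint_left]; intro e; simp only [mem_sdiff]; tauto
  have s1 := oddc_union_ge (S := (E \ A) \ F) (X := A \ F) (sg ((E \ A) \ F) + w + 1)
  rw [show sg ((E \ A) \ F) + w + 1 + sg (A \ F) = sg (E \ F) + w + 1 by
    rw [hEF, sg_union hdis]; ring, ← hEF] at s1
  have s2 := oddc_mono (S := (E \ A) \ F) (T := E \ A) sdiff_subset (sg ((E \ A) \ F) + w + 1)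
  have s3 := oddc_subadd (E \ A) (sg ((E \ A) \ F) + w + 1) (sg (E \ A) + w)
  have hD : E \ A = ((E \ A) \ F) ∪ (F \ A) := by
    ext e; simp only [mem_sdiff, mem_union]
    have := @hF e; tauto
  have hdis2 : Disjoint ((E \ A) \ F) (F \ A) := by
    rw [Finset.disjoint_left]; intro e; simp only [mem_sdiff]; tauto
  have hq : sg ((E \ A) \ F) + w + 1 + (sg (E \ A) + w) = 1 + sg (F \ A) := by
    have h1 : sg (E \ A) = sg ((E \ A) \ F) + sg (F \ A) := by
      conv_lhs => rw [hD]
      exact sg_union hdis2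
    rw [h1]
    have := zz (sg ((E \ A) \ F)); have := zz w
    linear_combination this + zz (sg ((E \ A) \ F))
  rw [hq] at s3
  have hsub : F \ A ⊆ E \ A := sdiff_subset_sdiff hF (Finset.Subset.refl _)
  have s4 := oddc_cc_mono hsub (1 + sg (F \ A))
  have s5 := oddc_union_ge (S := ∅) (X := F \ A) (1 : V → ZMod 2)
  rw [empty_union] at s5
  have s6 : oddc (∅ : Finset (Sym2 V)) 1 = Fintype.card V := by
    rw [oddc_empty]; simp [od]
  have c1 : #(F \ A) + #(F ∩ A) = #F := card_sdiff_add_card_inter F A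
  have c2 : #(A \ F) + #(A ∩ F) = #A := card_sdiff_add_card_inter A F
  rw [inter_comm A F] at c2
  rw [val]
  -- cc (F \ A) = card V - #(F \ A)
  have s7 : cc (F \ A) ≤ cc F + #(F ∩ A) := by
    have := cc_union_ge (F \ A) (F ∩ A)
    rwa [sdiff_union_inter] at this
  zify at c1 c2
  linarith

theorem val_parity {E : Finset (Sym2 V)} (w : V → ZMod 2) {A : Finset (Sym2 V)} (hA : A ⊆ E) :
    ((val E w A : ℤ) : ZMod 2) = (#E : ZMod 2) + sm w univ + ((cc E : ℤ) : ZMod 2) := by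
  have hc : #(E \ A) + #A = #E := card_sdiff_add_card_eq_card hA
  rw [val, ← hc]
  push_cast
  rw [oddc_parity, sm_add, sm_univ_sg]
  have h2 : (2 : ZMod 2) = 0 := rfl
  linear_combination (((cc (E \ A) : ℤ) : ZMod 2) - (#(E \ A) : ZMod 2)
    - sm w univ - (#A : ZMod 2) - ((cc E : ℤ) : ZMod 2)) * h2

theorem val_lt {E : Finset (Sym2 V)} {w : V → ZMod 2} {A B : Finset (Sym2 V)} (hA : A ⊆ E)
    (hB : B ⊆ E) (h : val E w A < val E w B) : val E w A ≤ val E w B - 2 := by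
  have h1 : ((val E w B - val E w A : ℤ) : ZMod 2) = 0 := by
    push_cast; rw [val_parity w hA, val_parity w hB]; ring
  have h2 := (ZMod.intCast_zmod_eq_zero_iff_dvd _ 2).1 h1
  omega

theorem cc_supermod_aux (X Y : Finset (Sym2 V)) (h : X ⊆ Y) (e : Sym2 V) :
    cc X + cc (insert e Y) ≥ cc Y + cc (insert e X) := by
  rw [← e_eq e]
  by_cases hY : Rch Y (e1 e) (e2 e)
  · rw [cc_insert_of_rch hY]
    have := cc_insert_le X s(e1 e, e2 e)
    linarith
  · rw [cc_insert_of_not_rch hY, cc_insert_of_not_rch fun h' => hY (h'.mono h)]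
    linarith

theorem cc_supermod_aux2 (X Y Z : Finset (Sym2 V)) (h : X ⊆ Y) :
    cc X + cc (Y ∪ Z) ≥ cc Y + cc (X ∪ Z) := by
  induction Z using Finset.induction_on with
  | empty => simp; linarith
  | insert e Z he ih =>
    rw [union_insert, union_insert]
    have := cc_supermod_aux (X ∪ Z) (Y ∪ Z) (union_subset_union_left h) e
    linarith

theorem cc_supermod (X Y : Finset (Sym2 V)) :
    cc X + cc Y ≤ cc (X ∪ Y) + cc (X ∩ Y) := by
  have := cc_supermod_aux2 (X ∩ Y) X Y inter_subset_left
  rw [union_eq_right.2 (inter_subset_right : X ∩ Y ⊆ Y)] at this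
  linarith

/-- Matroid-union type lemma. -/
theorem partition_lemma {α γ : Type*} [DecidableEq α] [DecidableEq γ] [Nonempty γ] (N : α → Finset γ)
    (A : Finset α) :
    ∀ (r : Finset α → ℤ) (O : Finset γ) (hmono : ∀ X Y, X ⊆ Y → r X ≤ r Y)
      (hsub : ∀ X Y, r (X ∪ Y) + r (X ∩ Y) ≤ r X + r Y)
      (hyp : ∀ X ⊆ A, (#X : ℤ) ≤ r X + #(O ∩ X.biUnion N)),
      ∃ T ⊆ A, (#T : ℤ) ≤ r T ∧ ∃ g : α → γ, (∀ e ∈ A \ T, g e ∈ N e ∧ g e ∈ O) ∧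
        Set.InjOn g (A \ T : Finset α) := by
  induction A using Finset.induction_on with
  | empty =>
    intro r O hmono hsub hyp
    have h0 := hyp ∅ (Finset.Subset.refl _)
    refine ⟨∅, Finset.Subset.refl _, by simpa using h0, ?_⟩
    exact ⟨fun _ => Classical.arbitrary γ, by simp, by simp⟩
  | insert a A ha ih =>
    intro r O hmono hsub hyp
    by_cases c1 : ∀ X ⊆ A, (#X : ℤ) ≤ (r (insert a X) - 1) + #(O ∩ X.biUnion N)
    · obtain ⟨T, hT, hrT, g, hg, hinj⟩ := ih (fun X => r (insert a X) - 1) O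
        (fun X Y h => by have := hmono _ _ (insert_subset_insert a h); linarith)
        (fun X Y => by
          have := hsub (insert a X) (insert a Y)
          rw [← insert_union_distrib, ← insert_inter_distrib] at this
          linarith) c1
      have haT : a ∉ T := fun h => ha (hT h)
      have hd : insert a A \ insert a T = A \ T := by
        ext x; simp only [mem_sdiff, mem_insert]
        by_cases hx : x = a
        · subst hx; simp [ha]
        · simp [hx]
      refine ⟨insert a T, insert_subset_insert a hT, ?_, g, ?_, ?_⟩
      · rw [card_insert_of_notMem haT]; push_cast; linarith
      · rw [hd]; exact hg
      · rw [hd]; exact hinj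
    by_cases c2 : ∃ c ∈ N a ∩ O, ∀ X ⊆ A, (#X : ℤ) ≤ r X + #(O.erase c ∩ X.biUnion N)
    · obtain ⟨c, hc, c2⟩ := c2
      obtain ⟨T, hT, hrT, g, hg, hinj⟩ := ih r (O.erase c) hmono hsub c2
      have haT : a ∉ T := fun h => ha (hT h)
      rw [mem_inter] at hc
      refine ⟨T, hT.trans (subset_insert _ _), hrT, Function.update g a c, ?_, ?_⟩
      · intro e he
        by_cases hea : e = a
        · subst hea; simpa using hc
        · rw [Function.update_of_ne hea]
          have := hg e (by simp [hea] at he ⊢; exact he)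
          exact ⟨this.1, mem_of_mem_erase this.2⟩
      · intro x hx y hy hxy
        by_cases hxa : x = a <;> by_cases hya : y = a
        · rw [hxa, hya]
        · subst hxa
          rw [Function.update_self, Function.update_of_ne hya] at hxy
          have := hg y (by simp [hya] at hy ⊢; exact hy)
          rw [← hxy] at this; simp at this
        · subst hya
          rw [Function.update_self, Function.update_of_ne hxa] at hxy
          have := hg x (by simp [hxa] at hx ⊢; exact hx)
          rw [hxy] at this; simp at this
        · rw [Function.update_of_ne hya, Function.update_of_ne hxa] at hxy
          exact hinj (by simp [hxa] at hx ⊢; exact hx) (by simp [hya] at hy ⊢; exact hy) hxy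
    exfalso
    -- maximal tight set
    have hyp' : ∀ X ⊆ A, (#X : ℤ) ≤ r X + #(O ∩ X.biUnion N) :=
      fun X hX => hyp X (hX.trans (subset_insert _ _))
    have tight_union : ∀ X ⊆ A, ∀ Y ⊆ A, (#X : ℤ) = r X + #(O ∩ X.biUnion N) →
        (#Y : ℤ) = r Y + #(O ∩ Y.biUnion N) →
        (#(X ∪ Y) : ℤ) = r (X ∪ Y) + #(O ∩ (X ∪ Y).biUnion N) := by
      intro X hX Y hY tX tY
      have h1 := hyp' (X ∪ Y) (union_subset hX hY)
      have h2 := hyp' (X ∩ Y) (inter_subset_left.trans hX)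
      have h3 := hsub X Y
      have h4 : #(X ∪ Y) + #(X ∩ Y) = #X + #Y := card_union_add_card_inter X Y
      have h5 : #(O ∩ (X ∪ Y).biUnion N) + #(O ∩ (X ∩ Y).biUnion N) ≤
          #(O ∩ X.biUnion N) + #(O ∩ Y.biUnion N) := by
        rw [← card_union_add_card_inter (O ∩ X.biUnion N) (O ∩ Y.biUnion N)]
        refine Nat.add_le_add (card_le_card ?_) (card_le_card ?_)
        · intro x; simp only [mem_inter, mem_union, mem_biUnion]
          rintro ⟨h, y, hy | hy, h'⟩
          · exact Or.inl ⟨h, y, hy, h'⟩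
          · exact Or.inr ⟨h, y, hy, h'⟩
        · intro x; simp only [mem_inter, mem_biUnion]
          rintro ⟨h, y, hy, h'⟩
          exact ⟨⟨h, y, hy.1, h'⟩, ⟨h, y, hy.2, h'⟩⟩
      zify at h4 h5
      linarith
    push Not at c1 c2
    obtain ⟨X0, hX0, hX0'⟩ := c1
    have hm0 := hmono _ _ (subset_insert a X0)
    have t0 : (#X0 : ℤ) = r X0 + #(O ∩ X0.biUnion N) := by
      have := hyp' X0 hX0; linarith
    have hr0 : r (insert a X0) = r X0 := by linarith
    obtain ⟨W, hW, hWmax⟩ := Finset.exists_max_image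
      (A.powerset.filter fun X => (#X : ℤ) = r X + #(O ∩ X.biUnion N)) card ⟨X0, by simp [hX0, t0]⟩
    simp only [mem_filter, mem_powerset] at hW hWmax
    have hall : ∀ X ⊆ A, (#X : ℤ) = r X + #(O ∩ X.biUnion N) → X ⊆ W := by
      intro X hX tX
      have h1 := hWmax (W ∪ X) ⟨union_subset hW.1 hX, tight_union _ hW.1 _ hX hW.2 tX⟩
      have := eq_of_subset_of_card_le (subset_union_left : W ⊆ W ∪ X) h1
      rw [this]; exact subset_union_right
    have hX0W := hall X0 hX0 t0
    have haW : a ∉ W := fun h => ha (hW.1 h)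
    have hrW : r (insert a W) ≤ r W := by
      have := hsub W (insert a X0)
      have e1 : W ∪ insert a X0 = insert a W := by
        rw [union_insert, union_eq_left.2 hX0W]
      have e2 : W ∩ insert a X0 = X0 := by
        rw [inter_insert_of_notMem haW, inter_eq_right.2 hX0W]
      rw [e1, e2] at this
      linarith
    have hoW : O ∩ (insert a W).biUnion N = O ∩ W.biUnion N := by
      ext c
      simp only [mem_inter, biUnion_insert, mem_union]
      constructor
      · rintro ⟨hc, hcN | hcN⟩
        · refine ⟨hc, ?_⟩
          obtain ⟨X, hX, hX'⟩ := c2 c (mem_inter.2 ⟨hcN, hc⟩)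
          have hh := hyp' X hX
          by_cases hcX : c ∈ X.biUnion N
          · have : #(O ∩ X.biUnion N) ≤ #(O.erase c ∩ X.biUnion N) + 1 := by
              rw [erase_inter]
              exact Nat.le_add_of_sub_le (pred_card_le_card_erase)
            zify at this
            have tX : (#X : ℤ) = r X + #(O ∩ X.biUnion N) := by linarith
            exact biUnion_subset_biUnion_of_subset_left N (hall X hX tX) hcX
          · exfalso
            rw [erase_inter, erase_eq_of_notMem] at hX'
            · linarith
            · simp only [mem_inter, not_and]; exact fun _ => hcX
        · exact ⟨hc, hcN⟩
      · rintro ⟨hc, h⟩; exact ⟨hc, Or.inr h⟩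
    have hfin := hyp (insert a W) (insert_subset_insert a hW.1)
    rw [hoW, card_insert_of_notMem haW] at hfin
    push_cast at hfin
    linarith [hW.2]

/-- Reachability classes only depend on the edges inside a closed set. -/
theorem cls_local_sub {S : Finset V} {H H' : Finset (Sym2 V)}
    (h1 : ∀ x y, s(x, y) ∈ H → x ∈ S → y ∈ S ∧ s(x, y) ∈ H') {x y : V} (hx : x ∈ S)
    (h : Rch H x y) : Rch H' x y := by
  have : x ∈ S → (y ∈ S ∧ Rch H' x y) := by
    refine Rch.le (R := fun x y => x ∈ S → (y ∈ S ∧ Rch H' x y)) ?_ ?_ ?_ h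
    · intro x hx; exact ⟨hx, Rch.refl _ _⟩
    · intro x y z hxy hyz hx
      obtain ⟨hy, r1⟩ := hxy hx
      obtain ⟨hz, r2⟩ := hyz hy
      exact ⟨hz, r1.trans r2⟩
    · intro x y he hx
      obtain ⟨hy, he'⟩ := h1 x y he hx
      exact ⟨hy, Rch.of_mem he'⟩
  exact (this hx).2

theorem cls_local {S : Finset V} {H H' : Finset (Sym2 V)}
    (h1 : ∀ x y, s(x, y) ∈ H → x ∈ S → y ∈ S)
    (h2 : ∀ x y, x ∈ S → (s(x, y) ∈ H ↔ s(x, y) ∈ H')) {x : V} (hx : x ∈ S) :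
    cls H x = cls H' x := by
  ext y
  rw [mem_cls, mem_cls]
  constructor
  · exact cls_local_sub (fun x y h hx => ⟨h1 x y h hx, (h2 x y hx).1 h⟩) hx
  · exact cls_local_sub (fun x y h hx => ⟨h1 x y ((h2 x y hx).2 h) hx, (h2 x y hx).2 h⟩) hx

theorem sg_apply (T : Finset (Sym2 V)) (x : V) : sg T x = ((#(T.filter fun e => e1 e = x) : ℕ) : ZMod 2) := by
  induction T using Finset.induction_on with
  | empty => simp [sg]
  | insert e T he ih =>
    rw [sg_insert he, Pi.add_apply, ih, filter_insert]
    by_cases h : e1 e = x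
    · rw [if_pos h, card_insert_of_notMem (by simp [he])]
      simp [dl, h, add_comm]
    · rw [if_neg h]
      simp [dl, Ne.symm h]

/-- closed vertex set -/
def Clo (S : Finset V) (D : Finset (Sym2 V)) : Prop := ∀ x y, s(x, y) ∈ D → x ∈ S → y ∈ S

theorem Clo.compl {S : Finset V} {D : Finset (Sym2 V)} (h : Clo S D) : Clo Sᶜ D := by
  intro x y hxy hx
  rw [mem_compl] at hx ⊢
  exact fun hy => hx (h y x (by rwa [Sym2.eq_swap]) hy)

theorem Clo.rch {S : Finset V} {D : Finset (Sym2 V)} (h : Clo S D) {x y : V} (hx : x ∈ S)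
    (hxy : Rch D x y) : y ∈ S := by
  refine Rch.le (R := fun x y => x ∈ S → y ∈ S) (fun _ h => h) (fun _ _ _ h h' hx => h' (h hx))
    ?_ hxy hx
  exact h

theorem Clo.mono {S : Finset V} {D D' : Finset (Sym2 V)} (h : Clo S D) (hD : D' ⊆ D) :
    Clo S D' := fun x y hxy => h x y (hD hxy)

theorem clo_cls (D : Finset (Sym2 V)) (v : V) : Clo (cls D v) D := by
  intro x y hxy hx
  rw [mem_cls] at *
  exact hx.trans (Rch.of_mem hxy)

noncomputable def J (S : Finset V) (D : Finset (Sym2 V)) (w : V → ZMod 2) (B : Finset (Sym2 V)) : ℤ :=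
  ∑ K ∈ S.image (cls (D \ B)), (2 - od (sm (sg (D \ B) + w) K)) - #(B.filter fun e => e1 e ∈ S)

theorem Phi_split {S : Finset V} {H : Finset (Sym2 V)} (h : Clo S H) (g : Finset V → ℤ) :
    Phi H g = ∑ K ∈ S.image (cls H), g K + ∑ K ∈ Sᶜ.image (cls H), g K := by
  rw [Phi, ← sum_union]
  · congr 1
    rw [← image_union, union_compl, comps]
  · rw [Finset.disjoint_left]
    intro K h1 h2
    rw [mem_image] at h1 h2
    obtain ⟨x, hx, rfl⟩ := h1
    obtain ⟨y, hy, hxy⟩ := h2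
    rw [mem_compl] at hy
    exact hy (h.rch hx (cls_eq.1 hxy).symm)

theorem val_split {S : Finset V} {D : Finset (Sym2 V)} (h : Clo S D) (w : V → ZMod 2)
    (B : Finset (Sym2 V)) : val D w B = J S D w B + J Sᶜ D w B - cc D := by
  have h1 := Phi_split (h.mono (sdiff_subset : D \ B ⊆ D))
    (fun K => 2 - od (sm (sg (D \ B) + w) K))
  have h2 : Phi (D \ B) (fun K => 2 - od (sm (sg (D \ B) + w) K)) =
      2 * cc (D \ B) - oddc (D \ B) (sg (D \ B) + w) := by
    simp only [Phi, cc, oddc, sum_sub_distrib, mul_sum]; simp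
  have h3 : #(B.filter fun e => e1 e ∈ S) + #(B.filter fun e => e1 e ∈ Sᶜ) = #B := by
    simp only [mem_compl]
    exact card_filter_add_card_filter_not _
  zify at h3
  rw [val, J, J]
  linarith

theorem J_congr {S : Finset V} {D : Finset (Sym2 V)} (h : Clo S D) {w w' : V → ZMod 2}
    {B B' : Finset (Sym2 V)} (hw : ∀ x ∈ S, w x = w' x)
    (hBD : B ⊆ D) (hBD' : B' ⊆ D)
    (hB : ∀ e ∈ D, e1 e ∈ S → (e ∈ B ↔ e ∈ B')) : J S D w B = J S D w' B' := by
  have hf : (B.filter fun e => e1 e ∈ S) = B'.filter fun e => e1 e ∈ S := by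
    ext e; simp only [mem_filter]
    constructor
    · rintro ⟨h1, h2⟩; exact ⟨(hB e (hBD h1) h2).1 h1, h2⟩
    · rintro ⟨h1, h2⟩; exact ⟨(hB e (hBD' h1) h2).2 h1, h2⟩
  have hD : ∀ e, e1 e ∈ S → (e ∈ D \ B ↔ e ∈ D \ B') := by
    intro e he
    simp only [mem_sdiff]
    constructor
    · rintro ⟨h1, h2⟩; exact ⟨h1, fun h' => h2 ((hB e h1 he).2 h')⟩
    · rintro ⟨h1, h2⟩; exact ⟨h1, fun h' => h2 ((hB e h1 he).1 h')⟩
  have he1 : ∀ x y, s(x, y) ∈ D → x ∈ S → e1 s(x, y) ∈ S := by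
    intro x y hxy hx
    have := e_eq s(x, y)
    rw [Sym2.eq_iff] at this
    rcases this with ⟨h1, _⟩ | ⟨h1, _⟩
    · rwa [h1]
    · rw [h1]; exact h x y hxy hx
  have hcls : ∀ x ∈ S, cls (D \ B) x = cls (D \ B') x := by
    intro x hx
    refine cls_local (h.mono sdiff_subset) ?_ hx
    intro x y hx
    constructor
    · intro hxy; exact (hD _ (he1 x y (mem_sdiff.1 hxy).1 hx)).1 hxy
    · intro hxy; exact (hD _ (he1 x y (mem_sdiff.1 hxy).1 hx)).2 hxy
  rw [J, J, hf]
  congr 1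
  have him : S.image (cls (D \ B)) = S.image (cls (D \ B')) := by
    ext K; simp only [mem_image]
    constructor
    · rintro ⟨x, hx, rfl⟩; exact ⟨x, hx, (hcls x hx).symm⟩
    · rintro ⟨x, hx, rfl⟩; exact ⟨x, hx, hcls x hx⟩
  rw [him]
  refine sum_congr rfl fun K hK => ?_
  have : sm (sg (D \ B) + w) K = sm (sg (D \ B') + w') K := by
    obtain ⟨x, hx, rfl⟩ := mem_image.1 hK
    refine sum_congr rfl fun y hy => ?_
    have hyS : y ∈ S := (h.mono sdiff_subset).rch hx (mem_cls.1 hy)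
    rw [Pi.add_apply, Pi.add_apply, hw y hyS, sg_apply, sg_apply]
    congr 3
    ext e; simp only [mem_filter]
    constructor
    · rintro ⟨h1, rfl⟩; exact ⟨(hD e hyS).1 h1, rfl⟩
    · rintro ⟨h1, rfl⟩; exact ⟨(hD e hyS).2 h1, rfl⟩
  rw [this]

theorem keyU {D : Finset (Sym2 V)} {w : V → ZMod 2}
    (huniq : ∀ B ⊆ D, B ≠ ∅ → val D w B < val D w ∅) (U : Finset V) :
    (∀ u ∈ U, sm (sg D + w) (cls D u) = 0) → Set.InjOn (cls D) (U : Set V) →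
    ∀ B ⊆ D, val D (w + ∑ u ∈ U, dl u) B ≤ val D w ∅ - #U := by
  induction U using Finset.induction_on with
  | empty =>
    intro _ _ B hB
    by_cases h : B = ∅
    · subst h; simp
    · have := huniq B hB h; simp; linarith
  | insert v U hv ih =>
    intro hU hinj B hB
    have ih' := ih (fun u hu => hU u (mem_insert_of_mem hu))
      (hinj.mono (by simp [Set.subset_insert]))
    set w1 := w + ∑ u ∈ U, dl u with hw1
    have hw2 : w + ∑ u ∈ insert v U, dl u = w1 + dl v := by
      rw [sum_insert hv, hw1]; ring
    rw [hw2, card_insert_of_notMem hv]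
    have hval : val D (w1 + dl v) B =
        val D w1 B - 1 + 2 * od (sm (sg (D \ B) + w1) (cls (D \ B) v)) := by
      rw [val, val, ← add_assoc, oddc_add_dl, od_flip]; ring
    rw [hval]
    rcases zcases (sm (sg (D \ B) + w1) (cls (D \ B) v)) with hs | hs
    · rw [hs]; have := ih' B hB
      have h0 : od 0 = 0 := by decide
      rw [h0]; push_cast; linarith
    · have h1 : od 1 = 1 := by decide
      rw [hs, h1]
      have hS := clo_cls D v
      set S := cls D v with hSdef
      have hwS : ∀ x ∈ S, w1 x = w x := by
        intro x hx
        rw [hw1, Pi.add_apply, Finset.sum_apply]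
        rw [sum_eq_zero, add_zero]
        intro u hu
        rw [dl, Pi.single_apply, if_neg]
        rintro rfl
        have := hinj (mem_coe.2 (mem_insert_self _ _)) (mem_coe.2 (mem_insert_of_mem hu))
          (cls_eq.2 (mem_cls.1 hx))
        exact hv (this ▸ hu)
      set B1 := B.filter (fun e => e1 e ∈ S) with hB1
      set B2 := B.filter (fun e => e1 e ∉ S) with hB2
      have hB1D : B1 ⊆ D := (filter_subset _ _).trans hB
      have hB2D : B2 ⊆ D := (filter_subset _ _).trans hB
      have a1 := val_split hS w1 B
      have a2 := val_split hS w1 B2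
      have a3 := val_split hS w B1
      have a4 := val_split hS w ∅
      have b1 : J S D w1 B = J S D w B1 := J_congr hS hwS hB hB1D (by
        intro e _ he; simp [hB1, he])
      have b2 : J Sᶜ D w1 B = J Sᶜ D w1 B2 := J_congr hS.compl (fun _ _ => rfl) hB hB2D (by
        intro e _ he; rw [mem_compl] at he; simp [hB2, he])
      have b3 : J S D w1 B2 = J S D w ∅ := J_congr hS hwS hB2D (empty_subset _) (by
        intro e _ he; simp [hB2, he])
      have b4 : J Sᶜ D w B1 = J Sᶜ D w ∅ := J_congr hS.compl (fun _ _ => rfl) hB1D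
        (empty_subset _) (by
        intro e _ he; rw [mem_compl] at he; simp [hB1, he])
      have hne : B1 ≠ ∅ := by
        intro h0
        have hnot : ∀ e ∈ B, e1 e ∉ S := by
          intro e he he'
          have : e ∈ B1 := mem_filter.2 ⟨he, he'⟩
          rw [h0] at this; simp at this
        have hc : cls D v = cls (D \ B) v := by
          refine cls_local hS ?_ (self_mem_cls D v)
          intro x y hx
          rw [mem_sdiff]
          constructor
          · intro hxy
            refine ⟨hxy, fun hb => hnot _ hb ?_⟩
            have := e_eq s(x, y)
            rw [Sym2.eq_iff] at this
            rcases this with ⟨h1, _⟩ | ⟨h1, _⟩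
            · rwa [h1]
            · rw [h1]; exact hS x y hxy hx
          · exact fun h => h.1
        have h2 := hU v (mem_insert_self _ _)
        rw [← hc] at hs
        have h3 : sm (sg (D \ B) + w1) (cls D v) = sm (sg D + w) (cls D v) := by
          refine sum_congr rfl fun y hy => ?_
          rw [Pi.add_apply, Pi.add_apply, hwS y hy, sg_apply, sg_apply]
          congr 3
          ext e; simp only [mem_filter, mem_sdiff]
          constructor
          · rintro ⟨h1, rfl⟩; exact ⟨h1.1, rfl⟩
          · rintro ⟨h1, rfl⟩; exact ⟨⟨h1, fun hb => hnot e hb hy⟩, rfl⟩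
        rw [h3, h2] at hs
        exact absurd hs (by decide)
      have c1 := val_lt hB1D (empty_subset _) (huniq B1 hB1D hne)
      have c2 := ih' B2 hB2D
      push_cast
      linarith

theorem cc_union_of_rch {S X : Finset (Sym2 V)} (h : ∀ e ∈ X, Rch S (e1 e) (e2 e)) :
    cc (S ∪ X) = cc S := by
  induction X using Finset.induction_on with
  | empty => simp
  | insert e X he ih =>
    rw [union_insert]
    have h1 : Rch (S ∪ X) (e1 e) (e2 e) := (h e (mem_insert_self _ _)).mono subset_union_left
    conv_lhs => rw [← e_eq e]
    rw [cc_insert_of_rch h1, ih fun e he => h e (mem_insert_of_mem he)]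

theorem rch_of_cc_eq {S T : Finset (Sym2 V)} (hST : S ⊆ T) (h : cc S = cc T) {e : Sym2 V}
    (he : e ∈ T) : Rch S (e1 e) (e2 e) := by
  by_contra hn
  have h1 := cc_insert_of_not_rch hn
  rw [e_eq] at h1
  have h2 : cc T ≤ cc (insert e S) := cc_mono (insert_subset he hST)
  linarith

theorem extend_lemma {D A T : Finset (Sym2 V)} (hT : T ⊆ A)
    (h : (#T : ℤ) ≤ cc D - cc (D ∪ T)) :
    ∃ T', T ⊆ T' ∧ T' ⊆ A ∧ cc (D ∪ T') = cc (D ∪ A) ∧ (#T' : ℤ) = cc D - cc (D ∪ A) := by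
  obtain ⟨T', hT', hmax⟩ := Finset.exists_max_image
    (A.powerset.filter fun X => T ⊆ X ∧ (#X : ℤ) ≤ cc D - cc (D ∪ X)) card
    ⟨T, by simp [hT]; linarith⟩
  simp only [mem_filter, mem_powerset] at hT' hmax
  obtain ⟨h1, h2, h3⟩ := hT'
  have hr : ∀ e ∈ A, Rch (D ∪ T') (e1 e) (e2 e) := by
    intro e he
    by_contra hn
    have hc := cc_insert_of_not_rch hn
    rw [e_eq, ← union_insert] at hc
    have heT : e ∉ T' := fun h' => hn (Rch.of_mem (by rw [e_eq]; exact mem_union_right _ h'))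
    have := hmax (insert e T') ⟨insert_subset he h1, h2.trans (subset_insert _ _), by
      rw [hc, card_insert_of_notMem heT]; push_cast; linarith⟩
    rw [card_insert_of_notMem heT] at this
    omega
  have hc := cc_union_of_rch hr
  rw [union_assoc, union_eq_right.2 h1] at hc
  refine ⟨T', h2, h1, hc.symm, ?_⟩
  have := cc_union_ge D T'
  linarith

theorem oddc_sum_congr {S X : Finset (Sym2 V)} (φ : Sym2 V → V)
    (h : ∀ e ∈ X, Rch S (e1 e) (φ e)) (p : V → ZMod 2) :
    oddc S (p + sg X) = oddc S (p + ∑ e ∈ X, dl (φ e)) := by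
  induction X using Finset.induction_on generalizing p with
  | empty => simp [sg]
  | insert e X he ih =>
    rw [sg_insert he, sum_insert he, ← add_assoc, ← add_assoc,
      ih (fun e he => h e (mem_insert_of_mem he))]
    rw [add_right_comm, oddc_add_dl_congr _ (h e (mem_insert_self _ _)), add_right_comm]

theorem ev_eq (D : Finset (Sym2 V)) (p : V → ZMod 2) :
    (#((comps D).filter fun K => sm p K = 0) : ℤ) = cc D - oddc D p := by
  simp only [cc, oddc, Phi]
  rw [← sum_sub_distrib, card_filter]
  push_cast
  refine sum_congr rfl fun K _ => ?_
  generalize sm p K = a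
  revert a; decide

theorem hard_step3 {E A : Finset (Sym2 V)} {w : V → ZMod 2}
    (IH : ∀ w' : V → ZMod 2, ∃ F ⊆ E \ A, cc F = cc (E \ A) ∧
      (#F : ℤ) + cc (E \ A) = Fintype.card V ∧ ∃ B ⊆ E \ A,
        oddc ((E \ A) \ F) (sg ((E \ A) \ F) + w' + 1) ≤ val (E \ A) w' B)
    (hA : A ⊆ E) (hmax : ∀ B ⊆ E, val E w B ≤ val E w A)
    (hcard : ∀ B ⊆ E, val E w B = val E w A → #B ≤ #A) :
    ∃ F ⊆ E, cc F = cc E ∧ (#F : ℤ) + cc E = Fintype.card V ∧ ∃ A ⊆ E,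
      oddc (E \ F) (sg (E \ F) + w + 1) ≤ val E w A := by
  set D := E \ A with hD
  have hDE : D ⊆ E := sdiff_subset
  have hDA : D ∪ A = E := by rw [hD]; exact sdiff_union_of_subset hA
  have hdisj : Disjoint D A := sdiff_disjoint
  have hvA : val E w A = val D w ∅ - #A + cc D - cc E := by
    simp only [val, ← hD, sdiff_empty, card_empty]; push_cast; ring
  have huniq : ∀ B ⊆ D, B ≠ ∅ → val D w B < val D w ∅ := by
    intro B hB hne
    have hAB : A ∪ B ⊆ E := union_subset hA (hB.trans hDE)
    have hd : Disjoint A B := (hdisj.mono_left hB).symm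
    have hv : val E w (A ∪ B) = val D w B - #A + cc D - cc E := by
      have : E \ (A ∪ B) = D \ B := by rw [hD, sdiff_sdiff_left]; rfl
      simp only [val, this, card_union_of_disjoint hd]; push_cast; ring
    have h1 := hmax _ hAB
    rcases lt_or_eq_of_le h1 with h | h
    · linarith
    · exfalso
      have := hcard _ hAB h
      rw [card_union_of_disjoint hd] at this
      have := card_pos.2 (nonempty_iff_ne_empty.2 hne)
      omega
  set O := (comps D).filter (fun K => sm (sg D + w) K = 0) with hO
  have hOc : (#O : ℤ) = val D w ∅ := by
    rw [hO, ev_eq]; simp only [val, sdiff_empty, card_empty]; push_cast; ring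
  have hyp : ∀ X ⊆ A, (#X : ℤ) ≤ (cc D - cc (D ∪ X)) +
      #(O ∩ X.biUnion fun e => {cls D (e1 e), cls D (e2 e)}) := by
    intro X hX
    have h1 := hmax (A \ X) (sdiff_subset.trans hA)
    have hEX : E \ (A \ X) = D ∪ X := by
      rw [← hDA]; ext e
      have := @hX e
      have : e ∈ D → e ∉ A := fun h => Finset.disjoint_left.1 hdisj h
      simp only [mem_sdiff, mem_union]; tauto
    have hc : #(A \ X) + #X = #A := card_sdiff_add_card_eq_card hX
    have hev := ev_eq (D ∪ X) (sg (D ∪ X) + w)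
    have hsub : O \ (X.biUnion fun e => {cls D (e1 e), cls D (e2 e)}) ⊆
        (comps (D ∪ X)).filter fun K => sm (sg (D ∪ X) + w) K = 0 := by
      intro K hK
      rw [mem_sdiff, hO, mem_filter] at hK
      obtain ⟨⟨hK1, hK2⟩, hK3⟩ := hK
      obtain ⟨v, rfl⟩ := mem_comps.1 hK1
      have hnot : ∀ e ∈ X, e1 e ∉ cls D v ∧ e2 e ∉ cls D v := by
        intro e he
        constructor
        · intro h'
          apply hK3
          rw [mem_biUnion]
          exact ⟨e, he, by rw [cls_eq.2 (mem_cls.1 h')]; simp⟩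
        · intro h'
          apply hK3
          rw [mem_biUnion]
          exact ⟨e, he, by rw [cls_eq.2 (mem_cls.1 h')]; simp⟩
      have hc : cls D v = cls (D ∪ X) v := by
        refine cls_local (clo_cls D v) ?_ (self_mem_cls D v)
        intro x y hx
        rw [mem_union]
        refine ⟨Or.inl, ?_⟩
        rintro (h | h)
        · exact h
        · exfalso
          have hn := hnot _ h
          have := e_eq s(x, y)
          rw [Sym2.eq_iff] at this
          rcases this with ⟨h1, _⟩ | ⟨_, h1⟩
          · rw [h1] at hn; exact hn.1 hx
          · rw [h1] at hn; exact hn.2 hx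
      rw [mem_filter]
      refine ⟨by rw [hc]; exact cls_mem_comps _ _, ?_⟩
      rw [← hK2]
      refine sum_congr rfl fun y hy => ?_
      rw [Pi.add_apply, Pi.add_apply, sg_apply, sg_apply]
      congr 3
      ext e; simp only [mem_filter, mem_union]
      constructor
      · rintro ⟨h1 | h1, rfl⟩
        · exact ⟨h1, rfl⟩
        · exact absurd hy (hnot e h1).1
      · rintro ⟨h1, rfl⟩; exact ⟨Or.inl h1, rfl⟩
    have hle := card_le_card hsub
    have hOO := card_sdiff_add_card_inter O (X.biUnion fun e => {cls D (e1 e), cls D (e2 e)})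
    rw [hvA, ← hOc] at h1
    simp only [val, hEX] at h1
    zify at hle hc hOO
    rw [hev] at hle
    linarith
  obtain ⟨T, hT, hrT, g, hg, hinj⟩ := partition_lemma
    (fun e : Sym2 V => ({cls D (e1 e), cls D (e2 e)} : Finset (Finset V))) A
    (fun X => cc D - cc (D ∪ X)) O
    (fun X Y h => by
      have := cc_mono (union_subset_union_right h : D ∪ X ⊆ D ∪ Y); linarith)
    (fun X Y => by
      have := cc_supermod (D ∪ X) (D ∪ Y)
      rw [← union_union_distrib_left, ← union_inter_distrib_left] at this
      linarith) hyp
  obtain ⟨T', hTT', hT'A, hcT', hT'c⟩ := extend_lemma hT hrT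
  rw [hDA] at hcT' hT'c
  have hsubA : A \ T' ⊆ A \ T := sdiff_subset_sdiff (Finset.Subset.refl _) hTT'
  set φ : Sym2 V → V := fun e => if g e = cls D (e1 e) then e1 e else e2 e with hφ
  have hφc : ∀ e ∈ A \ T', cls D (φ e) = g e := by
    intro e he
    have := (hg e (hsubA he)).1
    rw [mem_insert, mem_singleton] at this
    rw [hφ]
    dsimp only
    split_ifs with h
    · exact h.symm
    · exact (this.resolve_left h).symm
  have hφinj : Set.InjOn φ (A \ T' : Finset (Sym2 V)) := by
    intro x hx y hy hxy
    apply hinj (hsubA hx) (hsubA hy)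
    rw [← hφc x hx, ← hφc y hy, hxy]
  set U := (A \ T').image φ with hU
  have hUc : #U = #(A \ T') := card_image_of_injOn hφinj
  have hUs : ∑ u ∈ U, dl u = ∑ e ∈ A \ T', dl (φ e) := by
    rw [hU, sum_image hφinj]
  have hU1 : ∀ u ∈ U, sm (sg D + w) (cls D u) = 0 := by
    intro u hu
    obtain ⟨e, he, rfl⟩ := mem_image.1 hu
    rw [hφc e he]
    exact (mem_filter.1 (hg e (hsubA he)).2).2
  have hU2 : Set.InjOn (cls D) (U : Set V) := by
    intro x hx y hy hxy
    obtain ⟨e, he, rfl⟩ := mem_image.1 (mem_coe.1 hx)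
    obtain ⟨f, hf, rfl⟩ := mem_image.1 (mem_coe.1 hy)
    rw [hφc e he, hφc f hf] at hxy
    rw [hinj (hsubA he) (hsubA hf) hxy]
  obtain ⟨F, hF, hFc, hFn, B, hB, hle⟩ := IH (w + ∑ u ∈ U, dl u)
  have hkey := keyU huniq U hU1 hU2 B hB
  have hFT : cc (F ∪ T') = cc E := by
    rw [← hcT']
    have : cc ((F ∪ T') ∪ D) = cc (F ∪ T') := cc_union_of_rch fun e he =>
      (rch_of_cc_eq hF hFc he).mono subset_union_left
    rw [← this]
    congr 1
    ext e
    have := @hF e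
    simp only [mem_union]; tauto
  have hdFT : Disjoint F T' := (hdisj.mono_left hF).mono_right hT'A
  have hEF : E \ (F ∪ T') = (D \ F) ∪ (A \ T') := by
    rw [← hDA]; ext e
    have := @hF e
    have := @hT'A e
    have : e ∈ D → e ∉ A := fun h => Finset.disjoint_left.1 hdisj h
    simp only [mem_sdiff, mem_union]; tauto
  have hdd : Disjoint (D \ F) (A \ T') := (hdisj.mono_left sdiff_subset).mono_right sdiff_subset
  refine ⟨F ∪ T', union_subset (hF.trans hDE) (hT'A.trans hA), hFT, ?_, A, hA, ?_⟩
  · rw [card_union_of_disjoint hdFT]; push_cast; linarith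
  · have hs : sg (E \ (F ∪ T')) + w + 1 = (sg (D \ F) + w + 1) + sg (A \ T') := by
      rw [hEF, sg_union hdd]; ring
    rw [hs, oddc_sum_congr φ, ← hUs]
    · have h1 := oddc_mono (S := D \ F) (T := E \ (F ∪ T')) (by rw [hEF]; exact subset_union_left)
        (sg (D \ F) + w + 1 + ∑ u ∈ U, dl u)
      rw [show sg (D \ F) + w + 1 + ∑ u ∈ U, dl u = sg (D \ F) + (w + ∑ u ∈ U, dl u) + 1 by ring]
        at h1 ⊢
      have hc : #(A \ T') + #T' = #A := card_sdiff_add_card_eq_card hT'A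
      zify at hc hUc
      rw [hvA]
      linarith
    · intro e he
      have hr : Rch (E \ (F ∪ T')) (e1 e) (e2 e) := by
        apply Rch.of_mem; rw [e_eq, hEF]; exact mem_union_right _ he
      rw [hφ]; dsimp only
      split_ifs
      · exact Rch.refl _ _
      · exact hr

theorem hard (n : ℕ) : ∀ (E : Finset (Sym2 V)) (w : V → ZMod 2), #E = n →
    ∃ F ⊆ E, cc F = cc E ∧ (#F : ℤ) + cc E = Fintype.card V ∧ ∃ A ⊆ E,
      oddc (E \ F) (sg (E \ F) + w + 1) ≤ val E w A := by
  induction n using Nat.strong_induction_on with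
  | _ n ih =>
  intro E w hn
  by_cases hE : E = ∅
  · subst hE
    refine ⟨∅, Finset.Subset.refl _, rfl, by simp [cc_empty], ∅, Finset.Subset.refl _, ?_⟩
    simp only [val, sdiff_empty, cc_empty, card_empty, oddc_empty]
    have : ∀ v, od (((sg ∅ + w + 1 : V → ZMod 2)) v) = 1 - od ((sg ∅ + w : V → ZMod 2) v) := fun v => by
      rw [← od_flip]; rfl
    simp only [this, sum_sub_distrib]
    simp
    linarith
  obtain ⟨e0, he0⟩ := nonempty_iff_ne_empty.2 hE
  by_cases hbr : ∃ e ∈ E, ¬ Rch (E.erase e) (e1 e) (e2 e)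
  · obtain ⟨e, he, hb⟩ := hbr
    obtain ⟨F, hF, hFc, hFn, B, hB, hle⟩ := ih _ (by rw [← hn]; exact card_erase_lt_of_mem he)
      (E.erase e) w rfl
    have heF : e ∉ F := fun h => by simpa using hF h
    have heB : e ∉ B := fun h => by simpa using hB h
    have c1 := cc_insert_of_not_rch hb
    rw [e_eq, insert_erase he] at c1
    have c2 := cc_insert_of_not_rch (S := F) fun h => hb (h.mono hF)
    rw [e_eq] at c2
    have hd : ∀ X : Finset (Sym2 V), E \ insert e X = E.erase e \ X := by
      intro X; ext x; simp only [mem_sdiff, mem_insert, mem_erase]; tauto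
    refine ⟨insert e F, insert_subset he (hF.trans (erase_subset _ _)), by linarith, ?_,
      insert e B, insert_subset he (hB.trans (erase_subset _ _)), ?_⟩
    · rw [card_insert_of_notMem heF]; push_cast; linarith
    · rw [hd]
      refine hle.trans ?_
      simp only [val, hd, card_insert_of_notMem heB]
      push_cast; linarith
  push Not at hbr
  obtain ⟨A0, hA0, hA0max⟩ := Finset.exists_max_image E.powerset (val E w) ⟨∅, by simp⟩
  obtain ⟨A, hA, hAmax⟩ := Finset.exists_max_image
    (E.powerset.filter fun X => val E w X = val E w A0) card ⟨A0, by simpa using hA0⟩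
  simp only [mem_filter, mem_powerset] at hA hAmax hA0 hA0max
  obtain ⟨hAE, hAv⟩ := hA
  rw [← hAv] at hA0max hAmax
  by_cases hAe : A = ∅
  · subst hAe
    obtain ⟨F, hF, hFc, hFn, B, hB, hle⟩ := ih _ (by rw [← hn]; exact card_erase_lt_of_mem he0)
      (E.erase e0) (w + dl (e1 e0)) rfl
    have c1 := cc_insert_of_rch (hbr e0 he0)
    rw [e_eq, insert_erase he0] at c1
    have heB : e0 ∉ B := fun h => by simpa using hB h
    have heF : e0 ∉ F := fun h => by simpa using hF h
    have hd : E \ insert e0 B = E.erase e0 \ B := by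
      ext x; simp only [mem_sdiff, mem_insert, mem_erase]; tauto
    have hBE : insert e0 B ⊆ E := insert_subset he0 (hB.trans (erase_subset _ _))
    refine ⟨F, hF.trans (erase_subset _ _), by rw [hFc, c1], by rw [c1]; exact hFn, ∅,
      empty_subset _, ?_⟩
    have hEF : E \ F = insert e0 (E.erase e0 \ F) := by
      ext x; simp only [mem_sdiff, mem_insert, mem_erase]
      by_cases hx : x = e0
      · subst hx; simp [he0, heF]
      · simp [hx]
    have h1 : oddc (E \ F) (sg (E \ F) + w + 1) ≤
        oddc (E.erase e0 \ F) (sg (E.erase e0 \ F) + (w + dl (e1 e0)) + 1) := by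
      rw [hEF, sg_insert (by simp)]
      rw [show dl (e1 e0) + sg (E.erase e0 \ F) + w + 1 =
        sg (E.erase e0 \ F) + (w + dl (e1 e0)) + 1 by ring]
      exact oddc_insert_le _ _ _
    have h2 : val (E.erase e0) (w + dl (e1 e0)) B ≤ val E w (insert e0 B) + 2 := by
      simp only [val, hd, card_insert_of_notMem heB]
      rw [← add_assoc, oddc_add_dl, c1, od_flip]
      have := od_bound (sm (sg (E.erase e0 \ B) + w) (cls (E.erase e0 \ B) (e1 e0)))
      push_cast; linarith
    have h3 : val E w (insert e0 B) < val E w ∅ := by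
      refine lt_of_le_of_ne (hA0max _ hBE) fun h => ?_
      have := hAmax _ ⟨hBE, h⟩
      rw [card_insert_of_notMem heB] at this
      simp at this
    have h4 := val_lt hBE (empty_subset _) h3
    linarith
  · refine hard_step3 (A := A) (fun w' => ?_) hAE hA0max (fun B hB h => hAmax B ⟨hB, h⟩)
    refine ih _ ?_ (E \ A) w' rfl
    rw [← hn]
    exact card_lt_card (sdiff_ssubset hAE (nonempty_iff_ne_empty.2 hAe))

theorem sm_sg (S : Finset (Sym2 V)) (K : Finset V) :
    sm (sg S) K = ((#(S.filter fun e => e1 e ∈ K) : ℕ) : ZMod 2) := by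
  induction S using Finset.induction_on with
  | empty => simp [sg, sm]
  | insert e S he ih =>
    rw [sg_insert he, sm_add, ih, sm_dl, filter_insert]
    by_cases h : e1 e ∈ K
    · rw [if_pos h, if_pos h, card_insert_of_notMem (by simp [he])]
      push_cast; ring
    · rw [if_neg h, if_neg h, zero_add]

/-- edge finset of a graph -/
noncomputable def ef (H : SimpleGraph V) : Finset (Sym2 V) := univ.filter fun e => e ∈ H.edgeSet

theorem mem_ef {H : SimpleGraph V} {e : Sym2 V} : e ∈ ef H ↔ e ∈ H.edgeSet := by simp [ef]

theorem gr_ef (H : SimpleGraph V) : gr (ef H) = H := by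
  have : ((ef H : Finset (Sym2 V)) : Set (Sym2 V)) = H.edgeSet := by
    ext e; exact mem_ef
  rw [gr, this, fromEdgeSet_edgeSet]

theorem rch_ef (H : SimpleGraph V) (x y : V) : Rch (ef H) x y ↔ H.Reachable x y := by
  rw [Rch, gr_ef]

noncomputable def cset (H : SimpleGraph V) (c : H.ConnectedComponent) : Finset V :=
  univ.filter fun x => x ∈ c.supp

theorem cset_mk (H : SimpleGraph V) (v : V) : cset H (H.connectedComponentMk v) = cls (ef H) v := by
  ext x
  rw [mem_cls, rch_ef, cset, mem_filter]
  simp [ConnectedComponent.mem_supp_iff, ConnectedComponent.eq]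
  exact ⟨fun h => h.symm, fun h => h.symm⟩

theorem cset_inj (H : SimpleGraph V) : Function.Injective (cset H) := by
  intro c d h
  apply ConnectedComponent.supp_injective
  ext x
  have := congrArg (fun s => x ∈ s) h
  simpa [cset] using this

theorem ncard_comps (H : SimpleGraph V) (P : Finset V → Prop)
    [DecidablePred P] :
    {c : H.ConnectedComponent | P (cset H c)}.ncard = #((comps (ef H)).filter P) := by
  rw [← Set.ncard_image_of_injective _ (cset_inj H), ← Set.ncard_coe_finset]
  congr 1
  ext K
  simp only [Set.mem_image, Set.mem_ofPred_eq, coe_filter, mem_comps]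
  constructor
  · rintro ⟨c, hc, rfl⟩
    refine ⟨?_, hc⟩
    induction c using ConnectedComponent.ind with
    | h v => exact ⟨v, (cset_mk H v).symm⟩
  · rintro ⟨⟨v, rfl⟩, hP⟩
    exact ⟨H.connectedComponentMk v, by rw [cset_mk]; exact hP, cset_mk H v⟩

theorem cc_card (S : Finset (Sym2 V)) : cc S = #(comps S) := by simp [cc, Phi]

theorem oddc_card (S : Finset (Sym2 V)) (p : V → ZMod 2) :
    oddc S p = #((comps S).filter fun K => sm p K = 1) := by
  simp only [oddc, Phi, card_filter, od]; push_cast; rfl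

theorem numComp_eq (H : SimpleGraph V) : (numComp H : ℤ) = cc (ef H) := by
  have := ncard_comps H (fun _ => True)
  rw [cc_card, numComp, ← Set.ncard_univ]
  simpa using this

theorem edges_comp (H : SimpleGraph V) (c : H.ConnectedComponent) :
    (((H.induce c.supp).edgeSet.ncard : ℕ) : ZMod 2) = sm (sg (ef H)) (cset H c) := by
  rw [sm_sg]
  congr 1
  have hi : Function.Injective (Sym2.map (Subtype.val : c.supp → V)) :=
    Sym2.map.injective Subtype.val_injective
  rw [← Set.ncard_image_of_injective _ hi, ← Set.ncard_coe_finset]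
  congr 1
  ext e
  simp only [Set.mem_image, coe_filter, Set.mem_ofPred_eq, mem_ef]
  constructor
  · rintro ⟨f, hf, rfl⟩
    induction f using Sym2.ind with
    | _ x y =>
      have hadj : H.Adj x y := by simpa using hf
      refine ⟨by simpa using hadj, ?_⟩
      have := e_eq (Sym2.map Subtype.val s(x, y))
      rw [Sym2.map_mk, Sym2.eq_iff] at this
      rw [Sym2.map_mk, cset, mem_filter]
      refine ⟨mem_univ _, ?_⟩
      rcases this with ⟨h1, _⟩ | ⟨h1, _⟩
      · rw [h1]; exact x.2
      · rw [h1]; exact y.2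
  · rintro ⟨he, h1⟩
    have hadj : H.Adj (e1 e) (e2 e) := by rw [← mem_edgeSet, e_eq]; exact he
    have h1' : e1 e ∈ c.supp := (mem_filter.1 h1).2
    have h2' : e2 e ∈ c.supp := by
      rw [ConnectedComponent.mem_supp_iff] at h1' ⊢
      rw [← h1']; exact ConnectedComponent.sound hadj.symm.reachable
    refine ⟨s(⟨e1 e, h1'⟩, ⟨e2 e, h2'⟩), by simpa using hadj, ?_⟩
    rw [Sym2.map_mk]; exact e_eq e

theorem numOdd_eq (H : SimpleGraph V) : (numOddEdgeComps H : ℤ) = oddc (ef H) (sg (ef H)) := by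
  rw [oddc_card, ← ncard_comps, numOddEdgeComps]
  congr 3
  ext c
  rw [← edges_comp, ZMod.natCast_eq_one_iff_odd]

theorem numBetti_eq (H : SimpleGraph V) :
    (numOddBettiComps H : ℤ) = cc (ef H) - oddc (ef H) (sg (ef H) + 1) := by
  rw [← ev_eq, ← ncard_comps, numOddBettiComps]
  congr 3
  ext c
  have h1 : c.supp.ncard = #(cset H c) := by
    rw [← Set.ncard_coe_finset]; congr 1; ext x; simp [cset]
  have h2 : sm 1 (cset H c) = ((c.supp.ncard : ℕ) : ZMod 2) := by
    rw [h1]; simp [sm]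
  rw [sm_add, ← edges_comp, h2, h1, ← ZMod.intCast_eq_one_iff_odd]
  push_cast
  generalize (((H.induce c.supp).edgeSet.ncard : ℕ) : ZMod 2) = a
  generalize ((#(cset H c) : ℕ) : ZMod 2) = b
  revert a b; decide

theorem ef_delete (G : SimpleGraph V) (A : Finset (Sym2 V)) :
    ef (G.deleteEdges (A : Set (Sym2 V))) = ef G \ A := by
  ext e; simp [mem_ef, edgeSet_deleteEdges]

theorem cc_connected {G : SimpleGraph V} (h : G.Connected) : cc (ef G) = 1 := by
  rw [← numComp_eq, numComp]
  have := h.preconnected.subsingleton_connectedComponent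
  have := h.nonempty
  have : Nonempty G.ConnectedComponent := ⟨G.connectedComponentMk this.some⟩
  rw [Nat.card_of_subsingleton this.some]; rfl

theorem main (G : SimpleGraph V) (hG : G.Connected) :
    (xi G : ℤ) = sSup { y : ℤ | ∃ A ⊆ G.edgeSet,
      (numComp (G.deleteEdges A) : ℤ) + (numOddBettiComps (G.deleteEdges A) : ℤ)
        - (A.ncard : ℤ) - 1 = y } := by
  have hcG := cc_connected hG
  have hval : ∀ A : Finset (Sym2 V), (numComp (G.deleteEdges (A : Set (Sym2 V))) : ℤ) +
      (numOddBettiComps (G.deleteEdges (A : Set (Sym2 V))) : ℤ)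
        - ((A : Set (Sym2 V)).ncard : ℤ) - 1 = val (ef G) 1 A := by
    intro A
    rw [numComp_eq, numBetti_eq, ef_delete, Set.ncard_coe_finset, val, hcG]; ring
  have h11 : (1 : V → ZMod 2) + 1 = 0 := zz 1
  -- every tree is at least every value
  have heasy : ∀ T : SimpleGraph V, T ≤ G → T.IsTree → ∀ A ⊆ ef G,
      val (ef G) 1 A ≤ (numOddEdgeComps (G.deleteEdges T.edgeSet) : ℤ) := by
    intro T hT hTt A hA
    have hTe : T.edgeSet = (ef T : Set (Sym2 V)) := by ext e; exact mem_ef.symm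
    have hsub : ef T ⊆ ef G := fun e he => mem_ef.2 (edgeSet_mono hT (mem_ef.1 he))
    have hcT := cc_connected hTt.connected
    have hcard : #(ef T) + 1 = Fintype.card V := by
      have := (isTree_iff_connected_and_card.1 hTt).2
      rw [← Nat.card_eq_fintype_card (α := V), ← this, Nat.card_coe_set_eq, hTe,
        Set.ncard_coe_finset]
    have := easy (1 : V → ZMod 2) hsub hA (by rw [hcT, hcG]) (by rw [hcG]; exact_mod_cast hcard)
    rwa [add_assoc, h11, add_zero, ← ef_delete, ← hTe, ← numOdd_eq] at this
  obtain ⟨F, hF, hFc, hFn, A, hA, hle⟩ := hard _ (ef G) (1 : V → ZMod 2) rfl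
  have hefF : ef (gr F) = F := by
    ext e
    rw [mem_ef, gr, edgeSet_fromEdgeSet]
    constructor
    · exact fun h => h.1
    · exact fun h => ⟨h, G.not_isDiag_of_mem_edgeSet (mem_ef.1 (hF h))⟩
  have hFG : gr F ≤ G := by
    intro x y hxy
    have : s(x, y) ∈ ef (gr F) := mem_ef.2 hxy
    rw [hefF] at this
    exact mem_ef.1 (hF this)
  have hFt : (gr F).IsTree := by
    rw [isTree_iff_connected_and_card]
    constructor
    · have := hG.nonempty
      refine Connected.mk fun x y => ?_
      have hxy : Rch (ef G) x y := (rch_ef G x y).2 (hG.preconnected x y)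
      exact Rch.le (R := Rch F) (Rch.refl F) (fun _ _ _ => Rch.trans) (fun a b hab => by
        have h1 := rch_of_cc_eq hF hFc hab
        have h2 := e_eq s(a, b)
        rw [Sym2.eq_iff] at h2
        rcases h2 with ⟨h3, h4⟩ | ⟨h3, h4⟩
        · rwa [h3, h4] at h1
        · rw [h3, h4] at h1; exact h1.symm) hxy
    · rw [hcG] at hFn
      have hTe : (gr F).edgeSet = (F : Set (Sym2 V)) := by
        ext e; rw [← mem_ef, hefF, mem_coe]
      rw [Nat.card_eq_fintype_card (α := V), Nat.card_coe_set_eq, hTe, Set.ncard_coe_finset]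
      exact_mod_cast hFn
  have hFe : (gr F).edgeSet = (F : Set (Sym2 V)) := by
    ext e; rw [← mem_ef, hefF, mem_coe]
  have hFodd : (numOddEdgeComps (G.deleteEdges (gr F).edgeSet) : ℤ) ≤ val (ef G) 1 A := by
    rw [numOdd_eq, hFe, ef_delete]
    rwa [add_assoc, h11, add_zero] at hle
  obtain ⟨T, hT, hTt, hTx⟩ := Nat.sInf_mem (s := { m : ℕ | ∃ T : SimpleGraph V, T ≤ G ∧ T.IsTree ∧
    numOddEdgeComps (G.deleteEdges T.edgeSet) = m }) ⟨_, gr F, hFG, hFt, rfl⟩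
  have hxle : xi G ≤ numOddEdgeComps (G.deleteEdges (gr F).edgeSet) :=
    Nat.sInf_le ⟨gr F, hFG, hFt, rfl⟩
  have hxT : numOddEdgeComps (G.deleteEdges T.edgeSet) = xi G := hTx
  have hge : ∀ B ⊆ ef G, val (ef G) 1 B ≤ xi G := by
    intro B hB
    rw [← hxT]; exact heasy T hT hTt B hB
  symm
  apply IsGreatest.csSup_eq
  constructor
  · refine ⟨A, fun e he => mem_ef.1 (hA he), ?_⟩
    rw [hval]
    apply le_antisymm (hge A hA)
    zify at hxle
    linarith
  · rintro y ⟨B, hB, rfl⟩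
    have : B = ((univ.filter fun e => e ∈ B : Finset (Sym2 V)) : Set (Sym2 V)) := by
      ext e; simp
    rw [this, hval]
    refine hge _ fun e he => mem_ef.2 (hB ?_)
    simpa using he

end core
end Neb

/-- Nebeský's formula: for a connected finite simple graph `G`,
`ξ(G) = max_{A ⊆ E(G)} (c(G - A) + b(G - A) - |A| - 1)`. -/
theorem xi_eq_max {V : Type*} [Finite V] (G : SimpleGraph V) (hG : G.Connected) :
    (xi G : ℤ) = sSup { y : ℤ | ∃ A ⊆ G.edgeSet,
      (numComp (G.deleteEdges A) : ℤ) + (numOddBettiComps (G.deleteEdges A) : ℤ)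
        - (A.ncard : ℤ) - 1 = y } := by
  classical
  have : Fintype V := Fintype.ofFinite V
  exact Neb.main G hG
end
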